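/- arXiv:1908.00845 — 3 statements merged into one kernel-verified Lean document; each statement's English description precedes it below -/
import Mathlib

section
/- Under the stated assumptions, if the Lyapunov exponent χ is negative, then for every x ∈ E the almost sure limit f_{−∞}^t := lim_{k→∞} f_{t−k}^t(x) exists and does not depend on x; setting X_t := f_{−∞}^t, the process (X_t)_{t∈ℤ} is stationary and ergodic, satisfies X_t = F(X_{t−1}, Z_{t−1}, ε_t) for all t ∈ ℤ, and is the unique stationary process satisfying this recursion. -/
open MeasureTheory Filter Topology ProbabilityTheory
open scoped ENNReal NNReal

noncomputable section

/-- Shift on the two-sided path space. -/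
def pathShift {α : Type*} (x : ℤ → α) : ℤ → α := fun t => x (t + 1)

/-- Extended Lipschitz constant `c(g)` of a map `g`. -/
def lipConst {E : Type*} [PseudoEMetricSpace E] (g : E → E) : ℝ≥0∞ :=
  ⨆ (x : E) (y : E), edist (g x) (g y) / edist x y

/-- Backward iterations: `iterBack f s t = f_{t-s}^t = f_t ∘ ⋯ ∘ f_{t-s}`. -/
def iterBack {Ω E : Type*} (f : ℤ → Ω → E → E) : ℕ → ℤ → Ω → E → E
  | 0, t, ω, x => f t ω x
  | (s + 1), t, ω, x => f t ω (iterBack f s (t - 1) ω x)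

/-- `log⁺`. -/
def logPlus (x : ℝ) : ℝ := max (Real.log x) 0

/-- positive part of `log` on `ℝ≥0∞`. -/
def logPosE (x : ℝ≥0∞) : ℝ≥0∞ := if x = ⊤ then ⊤ else ENNReal.ofReal (Real.log x.toReal)

/-- negative part of `log` on `ℝ≥0∞`. -/
def logNegE (x : ℝ≥0∞) : ℝ≥0∞ := if x = 0 then ⊤ else ENNReal.ofReal (-(Real.log x.toReal))

/-- The expectation `E[log W]`, with values in `EReal`. -/
def eLogExp {Ω : Type*} [MeasurableSpace Ω] (P : Measure Ω) (W : Ω → ℝ≥0∞) : EReal :=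
  ((∫⁻ ω, logPosE (W ω) ∂P : ℝ≥0∞) : EReal) - ((∫⁻ ω, logNegE (W ω) ∂P : ℝ≥0∞) : EReal)

/-! ### Ergodic lemmas -/

/-- Running maximum of Birkhoff sums. -/
def runMax {W : Type*} (S : W → W) (φ : W → ℝ) : ℕ → W → ℝ
  | 0, _ => 0
  | (n + 1), w => max 0 (φ w + runMax S φ n (S w))

lemma runMax_nonneg {W : Type*} (S : W → W) (φ : W → ℝ) (n : ℕ) (w : W) :
    0 ≤ runMax S φ n w := by
  cases n with
  | zero => simp [runMax]
  | succ n => simp [runMax]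

lemma runMax_mono {W : Type*} (S : W → W) (φ : W → ℝ) (n : ℕ) :
    ∀ w : W, runMax S φ n w ≤ runMax S φ (n + 1) w := by
  induction n with
  | zero => intro w; exact runMax_nonneg S φ 1 w
  | succ n ih =>
    intro w
    show max 0 (φ w + runMax S φ n (S w)) ≤ max 0 (φ w + runMax S φ (n + 1) (S w))
    have := ih (S w)
    gcongr

lemma birkhoffSum_le_runMax {W : Type*} (S : W → W) (φ : W → ℝ) (n : ℕ) :
    ∀ w : W, birkhoffSum S φ n w ≤ runMax S φ n w := by
  induction n with
  | zero => intro w; simp [runMax]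
  | succ n ih =>
    intro w
    rw [birkhoffSum_succ']
    show _ ≤ max 0 (φ w + runMax S φ n (S w))
    have := ih (S w)
    exact le_max_of_le_right (by linarith)

lemma birkhoff_bdd {W : Type*} [MeasurableSpace W] {μ : Measure W} [IsProbabilityMeasure μ]
    {S : W → W} (hS : Ergodic S μ) {φ : W → ℝ} (hφm : Measurable φ) (hφ : Integrable φ μ)
    (hneg : ∫ w, φ w ∂μ < 0) :
    ∀ᵐ w ∂μ, ∃ C : ℝ, ∀ n : ℕ, birkhoffSum S φ n w ≤ C := by
  have hSm : Measurable S := hS.measurable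
  have hMm : ∀ n, Measurable (runMax S φ n) := by
    intro n
    induction n with
    | zero => exact measurable_const
    | succ n ih => exact measurable_const.max (hφm.add (ih.comp hSm))
  have hMi : ∀ n, Integrable (runMax S φ n) μ := by
    intro n
    induction n with
    | zero => exact integrable_zero _ _ _
    | succ n ih =>
      have h1 : Integrable (fun w => φ w + runMax S φ n (S w)) μ :=
        hφ.add (hS.toMeasurePreserving.integrable_comp_of_integrable ih)
      exact (integrable_zero W ℝ μ).sup h1
  have hmono : ∀ w, Monotone (fun n => runMax S φ n w) := fun w =>
    monotone_nat_of_le_succ fun n => runMax_mono S φ n w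
  set B : Set W := {w | BddAbove (Set.range fun n => runMax S φ n w)} with hB
  have hBm : MeasurableSet B := measurableSet_bddAbove_range hMm
  have hinv : S ⁻¹' B = B := by
    ext w
    simp only [hB, Set.mem_preimage, Set.mem_ofPred_eq]
    constructor
    · rintro ⟨C, hC⟩
      refine ⟨max 0 (φ w + C), ?_⟩
      rintro _ ⟨n, rfl⟩
      have h2 : runMax S φ n (S w) ≤ C := hC ⟨n, rfl⟩
      refine (runMax_mono S φ n w).trans ?_
      show max 0 (φ w + runMax S φ n (S w)) ≤ _
      gcongr
    · rintro ⟨C, hC⟩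
      refine ⟨C - φ w, ?_⟩
      rintro _ ⟨n, rfl⟩
      have h2 : runMax S φ (n + 1) w ≤ C := hC ⟨n + 1, rfl⟩
      have h3 : φ w + runMax S φ n (S w) ≤ runMax S φ (n + 1) w := le_max_right _ _
      show runMax S φ n (S w) ≤ _
      linarith
  rcases hS.toPreErgodic.ae_mem_or_ae_notMem hBm hinv with h | h
  · filter_upwards [h] with w hw
    obtain ⟨C, hC⟩ := hw
    exact ⟨C, fun n => (birkhoffSum_le_runMax S φ n w).trans (hC ⟨n, rfl⟩)⟩
  · exfalso
    have hlim : Tendsto (fun n => ∫ w, (runMax S φ (n + 1) w - runMax S φ n (S w)) ∂μ) atTop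
        (𝓝 (∫ w, φ w ∂μ)) := by
      refine tendsto_integral_of_dominated_convergence (fun w => |φ w|) ?_ hφ.abs ?_ ?_
      · intro n
        exact ((hMm (n + 1)).sub ((hMm n).comp hSm)).aestronglyMeasurable
      · intro n
        refine Eventually.of_forall fun w => ?_
        have h0 := runMax_nonneg S φ n (S w)
        have h3 : runMax S φ (n + 1) w = max 0 (φ w + runMax S φ n (S w)) := rfl
        rw [h3, Real.norm_eq_abs, abs_le]
        have h4 : φ w ≤ |φ w| := le_abs_self _
        have h5 : -|φ w| ≤ φ w := neg_abs_le _
        constructor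
        · have := le_max_right 0 (φ w + runMax S φ n (S w))
          linarith
        · have : max 0 (φ w + runMax S φ n (S w)) ≤ |φ w| + runMax S φ n (S w) :=
            max_le (by positivity) (by linarith)
          linarith
      · filter_upwards [h] with w hw
        have hw' : S w ∉ B := by
          intro hc
          exact hw (hinv ▸ hc)
        simp only [hB, Set.mem_ofPred_eq, not_bddAbove_iff] at hw'
        obtain ⟨_, ⟨n₀, rfl⟩, hn₀⟩ := hw' (-φ w)
        refine tendsto_const_nhds.congr' ?_
        filter_upwards [eventually_ge_atTop n₀] with n hn
        have h6 := hmono (S w) hn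
        have h3 : runMax S φ (n + 1) w = max 0 (φ w + runMax S φ n (S w)) := rfl
        simp only at h6 hn₀
        rw [h3, max_eq_right (by linarith)]
        ring
    have hge : 0 ≤ ∫ w, φ w ∂μ := by
      refine ge_of_tendsto' hlim fun n => ?_
      have hi : Integrable (fun w => runMax S φ n (S w)) μ :=
        hS.toMeasurePreserving.integrable_comp_of_integrable (hMi n)
      rw [integral_sub (hMi (n + 1)) hi]
      have he : ∫ w, runMax S φ n (S w) ∂μ = ∫ w, runMax S φ n w ∂μ := by
        have hmp := hS.toMeasurePreserving.map_eq
        conv_rhs => rw [← hmp]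
        rw [integral_map hSm.aemeasurable (hMm n).aestronglyMeasurable]
      rw [he]
      have := integral_mono (hMi n) (hMi (n + 1)) (runMax_mono S φ n)
      linarith
    linarith

lemma birkhoff_lin {W : Type*} [MeasurableSpace W] {μ : Measure W} [IsProbabilityMeasure μ]
    {S : W → W} (hS : Ergodic S μ) {φ : W → ℝ} (hφm : Measurable φ) (hφ : Integrable φ μ)
    {m : ℝ} (hneg : ∫ w, φ w ∂μ < m) :
    ∀ᵐ w ∂μ, ∃ C : ℝ, ∀ n : ℕ, birkhoffSum S φ n w ≤ C + n * m := by
  have h := birkhoff_bdd hS (φ := fun w => φ w - m) (hφm.sub_const m)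
    (hφ.sub (integrable_const m))
    (by rw [integral_sub hφ (integrable_const m)]; simp; linarith)
  filter_upwards [h] with w hw
  obtain ⟨C, hC⟩ := hw
  refine ⟨C, fun n => ?_⟩
  have := hC n
  simp only [birkhoffSum, Finset.sum_sub_distrib, Finset.sum_const, Finset.card_range,
    nsmul_eq_mul] at this ⊢
  linarith

lemma orbit_sublinear {W : Type*} [MeasurableSpace W] {μ : Measure W} [IsProbabilityMeasure μ]
    {S : W → W} (hS : Ergodic S μ) {φ : W → ℝ} (hφm : Measurable φ) (hφ : Integrable φ μ)
    {δ : ℝ} (hδ : 0 < δ) :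
    ∀ᵐ w ∂μ, ∃ C : ℝ, ∀ n : ℕ, φ (S^[n] w) ≤ C + δ * n := by
  have h1 := birkhoff_lin hS hφm hφ (m := ∫ w, φ w ∂μ + δ / 2) (by linarith)
  have h2 := birkhoff_lin hS hφm.neg hφ.neg (m := - ∫ w, φ w ∂μ + δ / 2)
    (by simp only [Pi.neg_apply]; rw [integral_neg]; linarith)
  filter_upwards [h1, h2] with w hw1 hw2
  obtain ⟨C1, hC1⟩ := hw1
  obtain ⟨C2, hC2⟩ := hw2
  refine ⟨C1 + C2 + (∫ w, φ w ∂μ + δ / 2), fun n => ?_⟩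
  have a := hC1 (n + 1)
  have b := hC2 n
  rw [birkhoffSum_succ] at a
  rw [birkhoffSum_neg] at b
  push_cast at a
  nlinarith

/-- Subadditive decay. -/
lemma subadd_decay {W : Type*} [MeasurableSpace W] {μ : Measure W} [IsProbabilityMeasure μ]
    {S : W → W} (hS : Ergodic S μ) (a : ℕ → W → ℝ) (ham : ∀ n, Measurable (a n))
    (hai : ∀ n, Integrable (a n) μ)
    (hsub : ∀ᵐ w ∂μ, ∀ k m, a (k + m) w ≤ a k w + a m (S^[k] w))
    (n : ℕ) (hn : 1 ≤ n) (hneg : ∫ w, a n w ∂μ < 0) :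
    ∃ δ : ℝ, 0 < δ ∧ ∀ᵐ w ∂μ, ∃ C : ℝ, ∀ N : ℕ, a N w ≤ C - δ * N := by
  have hn0 : (0 : ℝ) < n := by exact_mod_cast hn
  set I := ∫ w, a n w ∂μ with hI
  obtain ⟨η, hη, hηI⟩ : ∃ η : ℝ, 0 < η ∧ I < -(2 * η) := ⟨-I / 4, by linarith, by linarith⟩
  have h1 := birkhoff_lin hS (ham n) (hai n) (m := -(2 * η)) (by rw [← hI]; exact hηI)
  set p : W → ℝ := fun w => max (a 1 w) 0 with hp
  have hpm : Measurable p := (ham 1).max measurable_const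
  have hpi : Integrable p μ := (hai 1).sup (integrable_zero _ _ _)
  set η' : ℝ := η / (n * n) with hη'
  have hη'0 : 0 < η' := by positivity
  have h2 := orbit_sublinear hS hpm hpi hη'0
  refine ⟨η / n, by positivity, ?_⟩
  filter_upwards [h1, h2, hsub] with w hw1 hw2 hw
  obtain ⟨C1, hC1⟩ := hw1
  obtain ⟨C2, hC2⟩ := hw2
  have hp0 : ∀ w, 0 ≤ p w := fun w => le_max_right _ _
  -- telescoping
  have htel : ∀ N : ℕ, ∑ j ∈ Finset.range n, a (N + j) w
      ≤ ∑ j ∈ Finset.range n, a j w + birkhoffSum S (a n) N w := by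
    intro N
    induction N with
    | zero => simp
    | succ N ih =>
      have e1 := Finset.sum_range_succ (fun j => a (N + j) w) n
      have e2 := Finset.sum_range_succ' (fun j => a (N + j) w) n
      have e3 : ∑ j ∈ Finset.range n, a (N + 1 + j) w
          = ∑ j ∈ Finset.range n, a (N + (j + 1)) w := by
        refine Finset.sum_congr rfl fun j _ => ?_
        congr 1; ring
      rw [birkhoffSum_succ, e3]
      have := hw N n
      simp only [add_zero] at e2
      linarith
  -- one-step
  have hstep : ∀ N j : ℕ, a (N + j) w ≤ a N w + ∑ i ∈ Finset.range j, p (S^[N + i] w) := by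
    intro N j
    induction j with
    | zero => simp
    | succ j ih =>
      rw [Finset.sum_range_succ]
      have h3 := hw (N + j) 1
      have h4 : a 1 (S^[N + j] w) ≤ p (S^[N + j] w) := le_max_left _ _
      rw [← add_assoc N j 1]
      linarith
  -- bound for a (N+n)
  have hb : ∀ N j : ℕ, j < n → a (N + n) w ≤ a (N + j) w + n * (|C2| + η' * (N + n)) := by
    intro N j hj
    have h3 := hstep (N + j) (n - j)
    have e : N + j + (n - j) = N + n := by omega
    rw [e] at h3
    have h4 : ∑ i ∈ Finset.range (n - j), p (S^[N + j + i] w)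
        ≤ ∑ i ∈ Finset.range (n - j), (|C2| + η' * (N + n)) := by
      refine Finset.sum_le_sum fun i hi => ?_
      have h5 := hC2 (N + j + i)
      have h6 : j + i ≤ n := by have := Finset.mem_range.1 hi; omega
      have h6' : ((j + i : ℕ) : ℝ) ≤ n := by exact_mod_cast h6
      push_cast at h5 h6'
      have h7 := le_abs_self C2
      have h8 : η' * (N + j + i) ≤ η' * (N + n) := by
        apply mul_le_mul_of_nonneg_left _ hη'0.le; linarith
      linarith
    rw [Finset.sum_const, Finset.card_range, nsmul_eq_mul] at h4
    have h9 : ((n - j : ℕ) : ℝ) ≤ n := by exact_mod_cast Nat.sub_le n j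
    have h10 : ((n - j : ℕ) : ℝ) * (|C2| + η' * (N + n)) ≤ n * (|C2| + η' * (N + n)) := by
      apply mul_le_mul_of_nonneg_right h9; positivity
    linarith
  obtain ⟨A, hA⟩ : ∃ A : ℝ, ∀ N : ℕ, a (N + n) w ≤ A - (η / n) * ((N + n : ℕ) : ℝ) := by
    set A0 := ∑ j ∈ Finset.range n, a j w
    refine ⟨(A0 + C1 + n * (n * |C2|) + 2 * η * n) / n, fun N => ?_⟩
    have h3 : ∑ j ∈ Finset.range n, a (N + n) w
        ≤ ∑ j ∈ Finset.range n, (a (N + j) w + n * (|C2| + η' * (N + n))) :=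
      Finset.sum_le_sum fun j hj => hb N j (Finset.mem_range.1 hj)
    rw [Finset.sum_add_distrib, Finset.sum_const, Finset.sum_const, Finset.card_range,
      nsmul_eq_mul, nsmul_eq_mul] at h3
    have h4 := htel N
    have h5 := hC1 N
    have h6 : (n : ℝ) * (n * (|C2| + η' * (N + n))) = n * (n * |C2|) + η * (N + n) := by
      rw [hη']; field_simp
    rw [h6] at h3
    have h7 : a (N + n) w * n ≤ A0 + C1 + n * (n * |C2|) + 2 * η * n - η * (N + n) := by
      nlinarith
    push_cast
    have h8 : (A0 + C1 + n * (n * |C2|) + 2 * η * n) / n - η / n * (N + n)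
      = (A0 + C1 + n * (n * |C2|) + 2 * η * n - η * (N + n)) / n := by field_simp
    rw [h8, le_div_iff₀ hn0]
    exact h7
  refine ⟨max A (∑ j ∈ Finset.range n, |a j w| + η), fun N => ?_⟩
  by_cases hN : n ≤ N
  · obtain ⟨M, rfl⟩ := Nat.exists_eq_add_of_le hN
    have h3 := hA M
    rw [add_comm M n] at h3
    have := le_max_left A (∑ j ∈ Finset.range n, |a j w| + η)
    linarith
  · have h3 : a N w ≤ ∑ j ∈ Finset.range n, |a j w| :=
      (le_abs_self _).trans (Finset.single_le_sum (f := fun j => |a j w|)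
        (fun j _ => abs_nonneg _) (Finset.mem_range.2 (not_le.1 hN)))
    have h4 := le_max_right A (∑ j ∈ Finset.range n, |a j w| + η)
    have h5 : (N : ℝ) ≤ n := by exact_mod_cast (not_le.1 hN).le
    have h6 : η / n * N ≤ η := by
      rw [div_mul_eq_mul_div, div_le_iff₀ hn0]
      nlinarith
    linarith

/-! ### Lipschitz constants -/

lemma lipConst_edist_le {E : Type*} [MetricSpace E] (g : E → E) (x y : E) :
    edist (g x) (g y) ≤ lipConst g * edist x y := by
  by_cases hxy : x = y
  · subst hxy; simp
  · have h : edist (g x) (g y) / edist x y ≤ lipConst g :=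
      le_iSup₂ (f := fun x y => edist (g x) (g y) / edist x y) x y
    exact (ENNReal.div_le_iff (by simpa using hxy) (edist_ne_top x y)).1 h

lemma lipConst_le {E : Type*} [MetricSpace E] (g : E → E) (L : ℝ≥0∞)
    (h : ∀ x y, edist (g x) (g y) ≤ L * edist x y) : lipConst g ≤ L :=
  iSup₂_le fun x y => ENNReal.div_le_of_le_mul (h x y)

lemma lipConst_comp_le {E : Type*} [MetricSpace E] (g h : E → E) :
    lipConst (fun x => g (h x)) ≤ lipConst g * lipConst h := by
  refine lipConst_le _ _ fun x y => ?_
  refine (lipConst_edist_le g _ _).trans ?_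
  rw [mul_assoc]
  gcongr
  exact lipConst_edist_le h x y

lemma lipschitz_of_lipConst {E : Type*} [MetricSpace E] (g : E → E) (h : lipConst g < ⊤) :
    LipschitzWith (lipConst g).toNNReal g := by
  intro x y
  rw [ENNReal.coe_toNNReal h.ne]
  exact lipConst_edist_le g x y

/-- Lipschitz constant computed along a countable dense sequence. -/
def lipD {E : Type*} [MetricSpace E] [TopologicalSpace.SeparableSpace E] [Nonempty E]
    (g : E → E) : ℝ≥0∞ :=
  ⨆ (i : ℕ) (j : ℕ), edist (g (TopologicalSpace.denseSeq E i)) (g (TopologicalSpace.denseSeq E j)) /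
    edist (TopologicalSpace.denseSeq E i) (TopologicalSpace.denseSeq E j)

lemma lipD_eq {E : Type*} [MetricSpace E] [TopologicalSpace.SeparableSpace E] [Nonempty E]
    (g : E → E) (hg : lipConst g < ⊤) : lipD g = lipConst g := by
  have hle : lipD g ≤ lipConst g :=
    iSup₂_le fun i j => le_iSup₂ (f := fun x y => edist (g x) (g y) / edist x y) _ _
  refine le_antisymm hle (lipConst_le _ _ ?_)
  have hgc : Continuous g := (lipschitz_of_lipConst g hg).continuous
  have hL : lipD g ≠ ⊤ := (hle.trans_lt hg).ne
  refine (TopologicalSpace.denseRange_denseSeq E).induction_on₂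
    (p := fun x y => edist (g x) (g y) ≤ lipD g * edist x y) ?_ ?_
  · refine isClosed_le ?_ ?_
    · exact (hgc.comp continuous_fst).edist (hgc.comp continuous_snd)
    · exact (ENNReal.continuous_const_mul hL).comp continuous_edist
  · intro i j
    by_cases hxy : TopologicalSpace.denseSeq E i = TopologicalSpace.denseSeq E j
    · rw [hxy]; simp
    · have h : edist (g (TopologicalSpace.denseSeq E i)) (g (TopologicalSpace.denseSeq E j)) /
          edist (TopologicalSpace.denseSeq E i) (TopologicalSpace.denseSeq E j) ≤ lipD g :=
        le_iSup₂ (f := fun i j : ℕ => edist (g (TopologicalSpace.denseSeq E i))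
          (g (TopologicalSpace.denseSeq E j)) /
          edist (TopologicalSpace.denseSeq E i) (TopologicalSpace.denseSeq E j)) i j
      exact (ENNReal.div_le_iff (by simpa using hxy) (edist_ne_top _ _)).1 h

/-! ### Iterations -/

lemma iterBack_add {Ω E : Type*} (f : ℤ → Ω → E → E) (k m : ℕ) (ω : Ω) (x : E) :
    ∀ t : ℤ, iterBack f (k + m + 1) t ω x = iterBack f k t ω (iterBack f m (t - k - 1) ω x) := by
  induction k with
  | zero => intro t; simp [iterBack]
  | succ k ih =>
    intro t
    have e : k + 1 + m + 1 = (k + m + 1) + 1 := by ring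
    rw [e]
    show f t ω (iterBack f (k + m + 1) (t - 1) ω x) = _
    rw [ih (t - 1)]
    show _ = f t ω (iterBack f k (t - 1) ω (iterBack f m (t - ((k + 1 : ℕ) : ℤ) - 1) ω x))
    have e2 : t - 1 - (k : ℤ) - 1 = t - ((k + 1 : ℕ) : ℤ) - 1 := by push_cast; ring
    rw [e2]

lemma iterBack_lip {Ω E : Type*} [MetricSpace E] (f : ℤ → Ω → E → E) (ω : Ω)
    (h : ∀ t, lipConst (f t ω) < ⊤) (k : ℕ) : ∀ t, lipConst (iterBack f k t ω) < ⊤ := by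
  induction k with
  | zero => intro t; exact h t
  | succ k ih =>
    intro t
    exact (lipConst_comp_le (f t ω) (iterBack f k (t - 1) ω)).trans_lt
      (ENNReal.mul_lt_top (h t) (ih (t - 1)))

/-- Translation of paths. -/
def rot {α : Type*} (t : ℤ) (w : ℤ → α) : ℤ → α := fun s => w (s + t)

lemma rot_rot {α : Type*} (s t : ℤ) (w : ℤ → α) : rot s (rot t w) = rot (s + t) w := by
  funext u; simp [rot, add_assoc]

lemma rot_zero {α : Type*} (w : ℤ → α) : rot 0 w = w := by
  funext u; simp [rot]

lemma pathShift_eq_rot {α : Type*} : (pathShift : (ℤ → α) → (ℤ → α)) = rot 1 := rfl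

lemma rot_iter {α : Type*} (k : ℕ) (w : ℤ → α) : (rot (-1))^[k] w = rot (-(k : ℤ)) w := by
  induction k with
  | zero => simp [rot_zero]
  | succ k ih =>
    rw [Function.iterate_succ_apply', ih, rot_rot]
    congr 1; push_cast; ring

lemma measurable_rot {α : Type*} [MeasurableSpace α] (t : ℤ) :
    Measurable (rot t : (ℤ → α) → (ℤ → α)) :=
  measurable_pi_lambda _ fun s => measurable_pi_apply (s + t)

lemma rot_neg_ergodic {α : Type*} [MeasurableSpace α] {μ : Measure (ℤ → α)}
    (h : Ergodic pathShift μ) : Ergodic (rot (-1)) μ := by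
  let e : (ℤ → α) ≃ᵐ (ℤ → α) :=
    { toFun := rot 1
      invFun := rot (-1)
      left_inv := fun w => by rw [rot_rot]; simp [rot_zero]
      right_inv := fun w => by rw [rot_rot]; simp [rot_zero]
      measurable_toFun := measurable_rot 1
      measurable_invFun := measurable_rot (-1) }
  have he : Ergodic e μ := h
  exact he.symm

lemma rot_mp {α : Type*} [MeasurableSpace α] {μ : Measure (ℤ → α)}
    (h : Ergodic pathShift μ) (t : ℤ) : MeasurePreserving (rot t) μ μ := by
  have h1 : MeasurePreserving (rot 1) μ μ := h.toMeasurePreserving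
  have h2 := (rot_neg_ergodic h).toMeasurePreserving
  induction t using Int.induction_on with
  | zero =>
    have : (rot 0 : (ℤ → α) → (ℤ → α)) = id := by funext w; exact rot_zero w
    rw [this]; exact MeasurePreserving.id μ
  | succ i ih =>
    have : (rot ((i : ℤ) + 1) : (ℤ → α) → (ℤ → α)) = rot i ∘ rot 1 := by
      funext w; simp [rot_rot]
    rw [this]; exact ih.comp h1
  | pred i ih =>
    have : (rot (-(i : ℤ) - 1) : (ℤ → α) → (ℤ → α)) = rot (-i) ∘ rot (-1) := by
      funext w; simp [rot_rot, sub_eq_add_neg]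
    rw [this]; exact ih.comp h2

/-- The random maps on path space. -/
def pm {E E1 E2 : Type*} (F : E → E1 → E2 → E) (t : ℤ) (w : ℤ → E1 × E2) (x : E) : E :=
  F x (w (t - 1)).1 (w t).2

lemma pm_rot {E E1 E2 : Type*} (F : E → E1 → E2 → E) (s : ℤ) (w : ℤ → E1 × E2) (k : ℕ) :
    ∀ (t : ℤ) (x : E), iterBack (pm F) k t (rot s w) x = iterBack (pm F) k (t + s) w x := by
  have h0 : ∀ t x, pm F t (rot s w) x = pm F (t + s) w x := by
    intro t x
    have e : t - 1 + s = t + s - 1 := by ring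
    simp [pm, rot, e]
  induction k with
  | zero => intro t x; exact h0 t x
  | succ k ih =>
    intro t x
    show pm F t (rot s w) (iterBack (pm F) k (t - 1) (rot s w) x)
      = pm F (t + s) w (iterBack (pm F) k (t + s - 1) w x)
    have e : t - 1 + s = t + s - 1 := by ring
    rw [ih, h0, e]

lemma iterBack_comp {Ω Ω' E : Type*} (f : ℤ → Ω → E → E) (g : ℤ → Ω' → E → E) (Ψ : Ω → Ω')
    (h : ∀ t ω x, f t ω x = g t (Ψ ω) x) (k : ℕ) (ω : Ω) :
    ∀ t x, iterBack f k t ω x = iterBack g k t (Ψ ω) x := by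
  induction k with
  | zero => intro t x; exact h t ω x
  | succ k ih =>
    intro t x
    show f t ω (iterBack f k (t - 1) ω x) = g t (Ψ ω) (iterBack g k (t - 1) (Ψ ω) x)
    rw [ih, h]

lemma measurable_iter {E E1 E2 : Type*} [MeasurableSpace E]
    [MeasurableSpace E1] [MeasurableSpace E2] (F : E → E1 → E2 → E)
    (hF : Measurable fun p : E × E1 × E2 => F p.1 p.2.1 p.2.2) (k : ℕ) (x : E) :
    ∀ t, Measurable fun w => iterBack (pm F) k t w x := by
  have h1 : ∀ t : ℤ, Measurable fun w : ℤ → E1 × E2 => (w (t - 1)).1 := fun t =>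
    (measurable_pi_apply (t - 1)).fst
  have h2 : ∀ t : ℤ, Measurable fun w : ℤ → E1 × E2 => (w t).2 := fun t =>
    (measurable_pi_apply t).snd
  induction k with
  | zero => intro t; exact hF.comp (measurable_const.prodMk ((h1 t).prodMk (h2 t)))
  | succ k ih =>
    intro t
    exact hF.comp ((ih (t - 1)).prodMk ((h1 t).prodMk (h2 t)))

/-- Truncated logarithm of the Lipschitz constants. -/
def aSeq {E E1 E2 : Type*} [MetricSpace E] [TopologicalSpace.SeparableSpace E] [Nonempty E]
    (F : E → E1 → E2 → E) (K : ℕ) : ℕ → (ℤ → E1 × E2) → ℝ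
  | 0, _ => 0
  | (n + 1), w => Real.log (max (lipD (iterBack (pm F) n 0 w)).toReal
      (Real.exp (-((K : ℝ) * ((n + 1 : ℕ) : ℝ)))))

lemma measurable_lipD_iter {E E1 E2 : Type*} [MetricSpace E] [TopologicalSpace.SeparableSpace E]
    [Nonempty E] [MeasurableSpace E] [BorelSpace E]
    [MeasurableSpace E1] [MeasurableSpace E2] (F : E → E1 → E2 → E)
    (hF : Measurable fun p : E × E1 × E2 => F p.1 p.2.1 p.2.2) (k : ℕ) (t : ℤ) :
    Measurable fun w => lipD (iterBack (pm F) k t w) := by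
  have : SecondCountableTopology E := UniformSpace.secondCountable_of_separable E
  unfold lipD
  refine Measurable.iSup fun i => Measurable.iSup fun j => ?_
  exact ((measurable_iter F hF k _ t).edist (measurable_iter F hF k _ t)).div_const _

lemma measurable_aSeq {E E1 E2 : Type*} [MetricSpace E] [TopologicalSpace.SeparableSpace E]
    [Nonempty E] [MeasurableSpace E] [BorelSpace E]
    [MeasurableSpace E1] [MeasurableSpace E2] (F : E → E1 → E2 → E)
    (hF : Measurable fun p : E × E1 × E2 => F p.1 p.2.1 p.2.2) (K n : ℕ) :
    Measurable (aSeq F K n) := by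
  cases n with
  | zero => exact measurable_const
  | succ n =>
    exact Real.measurable_log.comp
      ((measurable_lipD_iter F hF n 0).ennreal_toReal.max measurable_const)

lemma aSeq_lower {E E1 E2 : Type*} [MetricSpace E] [TopologicalSpace.SeparableSpace E]
    [Nonempty E] (F : E → E1 → E2 → E) (K n : ℕ) (w : ℤ → E1 × E2) :
    -((K : ℝ) * n) ≤ aSeq F K n w := by
  cases n with
  | zero => simp [aSeq]
  | succ n =>
    have h := Real.log_le_log (Real.exp_pos _) (le_max_right
      (lipD (iterBack (pm F) n 0 w)).toReal (Real.exp (-((K : ℝ) * ((n + 1 : ℕ) : ℝ)))))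
    rwa [Real.log_exp] at h

lemma lipD_toReal_le {E E1 E2 : Type*} [MetricSpace E] [TopologicalSpace.SeparableSpace E]
    [Nonempty E] (F : E → E1 → E2 → E) (K n : ℕ) (w : ℤ → E1 × E2) :
    (lipD (iterBack (pm F) n 0 w)).toReal ≤ Real.exp (aSeq F K (n + 1) w) := by
  unfold aSeq
  rw [Real.exp_log (lt_max_of_lt_right (Real.exp_pos _))]
  exact le_max_left _ _

lemma aSeq_sub {E E1 E2 : Type*} [MetricSpace E] [TopologicalSpace.SeparableSpace E]
    [Nonempty E] (F : E → E1 → E2 → E) (K : ℕ) (w : ℤ → E1 × E2)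
    (hw : ∀ t, lipConst (pm F t w) < ⊤) (k m : ℕ) :
    aSeq F K (k + m) w ≤ aSeq F K k w + aSeq F K m ((rot (-1))^[k] w) := by
  rcases k with _ | k
  · simp [aSeq]
  rcases m with _ | m
  · simp [aSeq]
  have e : k + 1 + (m + 1) = (k + m + 1) + 1 := by ring
  rw [e, rot_iter]
  have hL := fun n t => iterBack_lip (pm F) w hw n t
  have e1 : iterBack (pm F) m 0 (rot (-((k + 1 : ℕ) : ℤ)) w)
      = iterBack (pm F) m (0 - (k : ℤ) - 1) w := by
    funext x
    rw [pm_rot]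
    congr 1; push_cast; ring
  have e2 : iterBack (pm F) (k + m + 1) 0 w
      = fun x => iterBack (pm F) k 0 w (iterBack (pm F) m (0 - (k : ℤ) - 1) w x) := by
    funext x; exact iterBack_add _ _ _ _ _ _
  simp only [aSeq]
  rw [e1, lipD_eq _ (hL _ _), lipD_eq _ (hL _ _), lipD_eq _ (hL _ _), e2]
  set g := iterBack (pm F) k 0 w
  set h := iterBack (pm F) m (0 - (k : ℤ) - 1) w
  have hg : lipConst g < ⊤ := hL _ _
  have hh : lipConst h < ⊤ := hL _ _
  have hc : (lipConst fun x => g (h x)).toReal ≤ (lipConst g).toReal * (lipConst h).toReal := by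
    rw [← ENNReal.toReal_mul]
    exact ENNReal.toReal_mono (ENNReal.mul_lt_top hg hh).ne (lipConst_comp_le g h)
  rw [← Real.log_mul (lt_max_of_lt_right (Real.exp_pos _)).ne'
    (lt_max_of_lt_right (Real.exp_pos _)).ne']
  refine Real.log_le_log (lt_max_of_lt_right (Real.exp_pos _)) (max_le ?_ ?_)
  · refine hc.trans (mul_le_mul (le_max_left _ _) (le_max_left _ _) ENNReal.toReal_nonneg ?_)
    exact le_max_of_le_right (Real.exp_pos _).le
  · have : Real.exp (-((K : ℝ) * ((k + m + 1 + 1 : ℕ) : ℝ)))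
        = Real.exp (-((K : ℝ) * ((k + 1 : ℕ) : ℝ))) * Real.exp (-((K : ℝ) * ((m + 1 : ℕ) : ℝ))) := by
      rw [← Real.exp_add]; congr 1; push_cast; ring
    rw [this]
    refine mul_le_mul (le_max_right _ _) (le_max_right _ _) (Real.exp_pos _).le ?_
    exact le_max_of_le_right (Real.exp_pos _).le

/-! ### Truncation and tightness -/

lemma measurable_logNegE : Measurable logNegE := by
  unfold logNegE
  refine Measurable.ite (measurableSet_singleton 0) measurable_const ?_
  exact (Real.measurable_log.comp ENNReal.measurable_toReal).neg.ennreal_ofReal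

lemma ofReal_log_max (c : ℝ≥0∞) (hc : c < ⊤) (L : ℝ) (hL : 0 ≤ L) :
    ENNReal.ofReal (Real.log (max c.toReal (Real.exp (-L)))) = logPosE c ∧
    ENNReal.ofReal (-Real.log (max c.toReal (Real.exp (-L)))) =
      min (logNegE c) (ENNReal.ofReal L) := by
  by_cases h0 : c = 0
  · subst h0
    rw [ENNReal.toReal_zero, max_eq_right (Real.exp_pos _).le, Real.log_exp]
    simp [logPosE, logNegE, hL]
  · have hpos : 0 < c.toReal := ENNReal.toReal_pos h0 hc.ne
    have h1 : Real.log (max c.toReal (Real.exp (-L))) = max (Real.log c.toReal) (-L) := by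
      rcases le_total c.toReal (Real.exp (-L)) with h | h
      · have := Real.log_le_log hpos h
        rw [Real.log_exp] at this
        rw [max_eq_right h, max_eq_right this, Real.log_exp]
      · have := Real.log_le_log (Real.exp_pos _) h
        rw [Real.log_exp] at this
        rw [max_eq_left h, max_eq_left this]
    rw [h1]
    constructor
    · rw [ENNReal.ofReal_max, ENNReal.ofReal_of_nonpos (p := -L) (by linarith)]
      simp [logPosE, hc.ne]
    · rw [← min_neg_neg, neg_neg, ENNReal.ofReal_min]
      simp [logNegE, h0]

lemma exists_trunc {Ω : Type*} [MeasurableSpace Ω] (P : Measure Ω) [IsProbabilityMeasure P]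
    (W : Ω → ℝ≥0∞) (hW : Measurable W) (hfin : ∀ᵐ ω ∂P, W ω < ⊤) (n : ℕ) (hn : 1 ≤ n)
    (hint : ∀ K : ℕ, Integrable
      (fun ω => Real.log (max (W ω).toReal (Real.exp (-((K : ℝ) * (n : ℝ)))))) P)
    (h : eLogExp P W < 0) :
    ∃ K : ℕ, ∫ ω, Real.log (max (W ω).toReal (Real.exp (-((K : ℝ) * (n : ℝ))))) ∂P < 0 := by
  have hpos : ∀ K : ℕ, ∫⁻ ω, ENNReal.ofReal
      (Real.log (max (W ω).toReal (Real.exp (-((K : ℝ) * (n : ℝ)))))) ∂P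
      = ∫⁻ ω, logPosE (W ω) ∂P := fun K => lintegral_congr_ae (by
    filter_upwards [hfin] with ω hω
    exact (ofReal_log_max _ hω _ (by positivity)).1)
  have hneg : ∀ K : ℕ, ∫⁻ ω, ENNReal.ofReal
      (-Real.log (max (W ω).toReal (Real.exp (-((K : ℝ) * (n : ℝ)))))) ∂P
      = ∫⁻ ω, min (logNegE (W ω)) (ENNReal.ofReal ((K : ℝ) * n)) ∂P :=
    fun K => lintegral_congr_ae (by
    filter_upwards [hfin] with ω hω
    exact (ofReal_log_max _ hω _ (by positivity)).2)
  have hA : ∫⁻ ω, logPosE (W ω) ∂P < ⊤ := by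
    rw [← hpos 0]; exact (hint 0).lintegral_lt_top
  have hAB : ∫⁻ ω, logPosE (W ω) ∂P < ∫⁻ ω, logNegE (W ω) ∂P := by
    by_contra hc
    rw [not_lt] at hc
    unfold eLogExp at h
    refine absurd h (not_lt.2 ?_)
    refine (EReal.sub_nonneg ?_ ?_).2 (by exact_mod_cast hc)
    · exact Or.inl (by simpa using hA.ne)
    · exact Or.inl (by simp)
  have hsup : ∫⁻ ω, logNegE (W ω) ∂P
      = ⨆ K : ℕ, ∫⁻ ω, min (logNegE (W ω)) (ENNReal.ofReal ((K : ℝ) * n)) ∂P := by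
    rw [← lintegral_iSup]
    · congr 1
      funext ω
      have : (⨆ K : ℕ, ENNReal.ofReal ((K : ℝ) * n)) = ⊤ := by
        rw [eq_top_iff, ← ENNReal.iSup_natCast]
        refine iSup_mono fun K => ?_
        rw [← ENNReal.ofReal_natCast]
        apply ENNReal.ofReal_le_ofReal
        have : (1 : ℝ) ≤ n := by exact_mod_cast hn
        nlinarith [(Nat.cast_nonneg K : (0 : ℝ) ≤ K)]
      have h2 := inf_iSup_eq (logNegE (W ω)) (fun K : ℕ => ENNReal.ofReal ((K : ℝ) * n))
      rw [this, inf_top_eq] at h2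
      exact h2
    · intro K
      exact (measurable_logNegE.comp hW).min measurable_const
    · intro K K' hK ω
      have : (K : ℝ) ≤ K' := by exact_mod_cast hK
      show min _ _ ≤ min _ _
      gcongr
  rw [hsup, lt_iSup_iff] at hAB
  obtain ⟨K, hK⟩ := hAB
  refine ⟨K, ?_⟩
  rw [integral_eq_lintegral_pos_part_sub_lintegral_neg_part (hint K), hpos, hneg, sub_neg]
  refine (ENNReal.toReal_lt_toReal hA.ne ?_).2 hK
  rw [← hneg]
  exact (hint K).neg.lintegral_lt_top.ne

lemma null_of_tight {Ω : Type*} [MeasurableSpace Ω] (P : Measure Ω) [IsProbabilityMeasure P]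
    (V : ℕ → Ω → ℝ) (V0 : Ω → ℝ) (hV0 : Measurable V0)
    (heq : ∀ k (M : ℕ), P {ω | (M : ℝ) < V k ω} = P {ω | (M : ℝ) < V0 ω})
    (A : Set Ω) (hA : ∀ᵐ ω ∂P, ω ∈ A → ∀ M : ℕ, ∀ᶠ k in atTop, (M : ℝ) < V k ω) : P A = 0 := by
  have h1 : ∀ M : ℕ, P A ≤ P {ω | (M : ℝ) < V0 ω} := by
    intro M
    have h2 : P A ≤ P (⋃ n : ℕ, {ω | ∀ k ≥ n, (M : ℝ) < V k ω}) := by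
      refine measure_mono_ae ?_
      filter_upwards [hA] with ω hω hωA
      obtain ⟨n, hn⟩ := eventually_atTop.1 (hω hωA M)
      exact Set.mem_iUnion.2 ⟨n, hn⟩
    refine h2.trans ?_
    have hm : Monotone fun n : ℕ => {ω | ∀ k ≥ n, (M : ℝ) < V k ω} :=
      fun n n' hn ω hω k hk => hω k (hn.trans hk)
    rw [hm.measure_iUnion]
    refine iSup_le fun n => ?_
    rw [← heq n M]
    exact measure_mono fun ω hω => hω n le_rfl
  have h3 : Tendsto (fun M : ℕ => P {ω | (M : ℝ) < V0 ω}) atTop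
      (𝓝 (P (⋂ M : ℕ, {ω | (M : ℝ) < V0 ω}))) := by
    refine tendsto_measure_iInter_atTop ?_ ?_ ⟨0, measure_ne_top _ _⟩
    · intro M
      exact (measurableSet_lt measurable_const hV0).nullMeasurableSet
    · intro M M' hM ω hω
      have h4 : (M : ℝ) ≤ M' := by exact_mod_cast hM
      exact lt_of_le_of_lt h4 hω
  have h5 : (⋂ M : ℕ, {ω | (M : ℝ) < V0 ω}) = ∅ := by
    ext ω
    simp only [Set.mem_iInter, Set.mem_empty_iff_false, iff_false, not_forall]
    obtain ⟨M, hM⟩ := exists_nat_gt (V0 ω)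
    exact ⟨M, fun h => lt_asymm h hM⟩
  rw [h5, measure_empty] at h3
  exact le_antisymm (ge_of_tendsto' h3 h1) zero_le

/-- Theorem 1.1, part 2: if the Lyapunov exponent `χ` is negative, the
backward iterations `f_{t-k}^t(x)` converge a.s. to a limit `X_t` not depending on `x`; the
process `(X_t)` is stationary and ergodic, satisfies `X_t = F(X_{t-1}, Z_{t-1}, ε_t)`, and is
the unique stationary solution of this recursion. -/
theorem stationary_ergodic_solution_of_neg_lyapunov
    {Ω E E1 E2 : Type*} [MeasurableSpace Ω]
    [MetricSpace E] [CompleteSpace E] [TopologicalSpace.SeparableSpace E]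
    [LocallyCompactSpace E] [MeasurableSpace E] [BorelSpace E]
    [MeasurableSpace E1] [MeasurableSpace E2]
    (P : Measure Ω) [IsProbabilityMeasure P]
    (Z : ℤ → Ω → E1) (ε : ℤ → Ω → E2) (F : E → E1 → E2 → E)
    (hZ : ∀ t, Measurable (Z t)) (hε : ∀ t, Measurable (ε t))
    (hF : Measurable fun p : E × E1 × E2 => F p.1 p.2.1 p.2.2)
    -- stationarity and ergodicity of ((Z_t, ε_t))
    (hstat : Ergodic pathShift (P.map (fun ω (t : ℤ) => (Z t ω, ε t ω))))
    (f : ℤ → Ω → E → E)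
    (hf : ∀ t ω x, f t ω x = F x (Z (t - 1) ω) (ε t ω))
    -- the random maps are almost surely Lipschitz
    (hLip : ∀ t : ℤ, ∀ᵐ ω ∂P, lipConst (f t ω) < ⊤)
    (x₀ : E)
    (hlogc : Integrable (fun ω => logPlus (lipConst (f 0 ω)).toReal) P)
    (hlogd : Integrable (fun ω => logPlus (dist x₀ (f 0 ω x₀))) P)
    -- the Lyapunov exponent, assumed negative
    (χ : EReal)
    (hχdef : χ = ⨅ n : {n : ℕ // 1 ≤ n}, (((n.1 : ℝ)⁻¹ : ℝ) : EReal) *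
          eLogExp P (fun ω => lipConst (iterBack f (n.1 - 1) (n.1 : ℤ) ω)))
    (hχneg : χ < 0) :
    ∃ X : ℤ → Ω → E,
      (∀ t, Measurable (X t)) ∧
      -- the backward iterations converge a.s. to X_t, for every starting point x
      (∀ (x : E) (t : ℤ), ∀ᵐ ω ∂P,
        Tendsto (fun k : ℕ => iterBack f k t ω x) atTop (𝓝 (X t ω))) ∧
      -- X solves the recursion
      (∀ t : ℤ, ∀ᵐ ω ∂P, X t ω = F (X (t - 1) ω) (Z (t - 1) ω) (ε t ω)) ∧
      -- X is stationary and ergodic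
      Ergodic pathShift (P.map (fun ω (t : ℤ) => X t ω)) ∧
      -- X is the unique stationary solution
      (∀ Y : ℤ → Ω → E, (∀ t, Measurable (Y t)) →
        MeasurePreserving pathShift (P.map (fun ω (t : ℤ) => Y t ω))
          (P.map (fun ω (t : ℤ) => Y t ω)) →
        (∀ t : ℤ, ∀ᵐ ω ∂P, Y t ω = F (Y (t - 1) ω) (Z (t - 1) ω) (ε t ω)) →
        ∀ t, Y t =ᵐ[P] X t) := by
  have hne : Nonempty E := ⟨x₀⟩
  have hsc : SecondCountableTopology E := UniformSpace.secondCountable_of_separable E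
  set Ψ : Ω → (ℤ → E1 × E2) := fun ω t => (Z t ω, ε t ω) with hΨdef
  have hΨ : Measurable Ψ := measurable_pi_lambda _ fun t => (hZ t).prodMk (hε t)
  set Q := P.map Ψ with hQ
  have hQp : IsProbabilityMeasure Q := Measure.isProbabilityMeasure_map hΨ.aemeasurable
  have hS : Ergodic (rot (-1)) Q := rot_neg_ergodic hstat
  have hrot : ∀ t, MeasurePreserving (fun ω => rot t (Ψ ω)) P Q := fun t =>
    (rot_mp hstat t).comp ⟨hΨ, rfl⟩
  have hfΨ : ∀ t ω x, f t ω x = pm F t (Ψ ω) x := fun t ω x => hf t ω x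
  have hfΨ' : ∀ t ω, f t ω = pm F t (Ψ ω) := fun t ω => funext (hfΨ t ω)
  have hit : ∀ k t ω, iterBack f k t ω = iterBack (pm F) k t (Ψ ω) := fun k t ω =>
    funext fun x => iterBack_comp f (pm F) Ψ hfΨ k ω t x
  have hitr : ∀ k t ω x, iterBack f k t ω x = iterBack (pm F) k 0 (rot t (Ψ ω)) x := by
    intro k t ω x
    rw [hit, pm_rot, zero_add]
  have hLipA : ∀ᵐ ω ∂P, ∀ t, lipConst (f t ω) < ⊤ := ae_all_iff.2 hLip
  have hgood : ∀ᵐ ω ∂P, ∀ t, lipConst (pm F t (Ψ ω)) < ⊤ := by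
    filter_upwards [hLipA] with ω hω t
    rw [← hfΨ']; exact hω t
  have ham := measurable_aSeq F hF
  -- subadditivity
  have hsub : ∀ K, ∀ᵐ w ∂Q, ∀ k m,
      aSeq F K (k + m) w ≤ aSeq F K k w + aSeq F K m ((rot (-1))^[k] w) := by
    intro K
    rw [ae_all_iff]; intro k
    rw [ae_all_iff]; intro m
    rw [hQ, ae_map_iff hΨ.aemeasurable]
    · filter_upwards [hgood] with ω hω
      exact aSeq_sub F K _ hω k m
    · exact measurableSet_le (ham _ _) ((ham _ _).add ((ham _ _).comp (hS.measurable.iterate k)))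
  -- integrability
  have hint1 : ∀ K, Integrable (aSeq F K 1) Q := by
    intro K
    rw [hQ, integrable_map_measure (ham K 1).aestronglyMeasurable hΨ.aemeasurable]
    refine ((integrable_const (K : ℝ)).add hlogc).mono'
      ((ham K 1).comp hΨ).aestronglyMeasurable ?_
    filter_upwards [hLipA] with ω hω
    have h1 := aSeq_lower F K 1 (Ψ ω)
    have h0 : 0 ≤ logPlus (lipConst (f 0 ω)).toReal := le_max_right _ _
    have hK : (0 : ℝ) ≤ K := Nat.cast_nonneg K
    have h2 : aSeq F K 1 (Ψ ω) ≤ logPlus (lipConst (f 0 ω)).toReal := by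
      have e : aSeq F K 1 (Ψ ω) = Real.log (max (lipConst (f 0 ω)).toReal
          (Real.exp (-((K : ℝ) * ((0 + 1 : ℕ) : ℝ))))) := by
        rw [← lipD_eq _ (hω 0), hfΨ']
        rfl
      rw [e]
      rcases le_total (lipConst (f 0 ω)).toReal
        (Real.exp (-((K : ℝ) * ((0 + 1 : ℕ) : ℝ)))) with h | h
      · rw [max_eq_right h, Real.log_exp]
        push_cast
        linarith
      · rw [max_eq_left h]; exact le_max_left _ _
    simp only [Function.comp_apply, Real.norm_eq_abs, Pi.add_apply]
    rw [abs_le]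
    push_cast at h1
    constructor <;> linarith
  have hai : ∀ K n, Integrable (aSeq F K n) Q := by
    intro K n
    induction n with
    | zero => exact integrable_zero _ _ _
    | succ n ih =>
      have h1 : Integrable (fun w => aSeq F K 1 ((rot (-1))^[n] w)) Q :=
        (hS.toMeasurePreserving.iterate n).integrable_comp_of_integrable (hint1 K)
      refine (((ih.abs).add h1.abs).add (integrable_const ((K : ℝ) * ((n + 1 : ℕ) : ℝ)))).mono'
        (ham K (n + 1)).aestronglyMeasurable ?_
      filter_upwards [hsub K] with w hw
      have h2 := hw n 1
      have h3 := aSeq_lower F K (n + 1) w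
      have h4 := le_abs_self (aSeq F K n w)
      have h5 := le_abs_self (aSeq F K 1 ((rot (-1))^[n] w))
      have h6 := abs_nonneg (aSeq F K n w)
      have h7 := abs_nonneg (aSeq F K 1 ((rot (-1))^[n] w))
      have h8 : 0 ≤ (K : ℝ) * ((n + 1 : ℕ) : ℝ) := by positivity
      simp only [Real.norm_eq_abs, Pi.add_apply]
      rw [abs_le]
      constructor <;> linarith
  -- negativity
  obtain ⟨n, hn, K, hKneg⟩ : ∃ n : ℕ, 1 ≤ n ∧ ∃ K : ℕ, ∫ w, aSeq F K n w ∂Q < 0 := by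
    rw [hχdef, iInf_lt_iff] at hχneg
    obtain ⟨⟨n, hn⟩, hlt⟩ := hχneg
    simp only at hlt
    obtain ⟨n, rfl⟩ : ∃ n', n = n' + 1 := ⟨n - 1, by omega⟩
    refine ⟨n + 1, hn, ?_⟩
    have hlt' : eLogExp P (fun ω => lipConst (iterBack f n ((n + 1 : ℕ) : ℤ) ω)) < 0 := by
      by_contra hc
      rw [not_lt] at hc
      refine absurd hlt (not_lt.2 (EReal.mul_nonneg ?_ hc))
      exact_mod_cast (by positivity : (0 : ℝ) ≤ (((n + 1 : ℕ) : ℝ))⁻¹)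
    set W : Ω → ℝ≥0∞ := fun ω => lipD (iterBack (pm F) n 0 (rot ((n + 1 : ℕ) : ℤ) (Ψ ω))) with hW
    have hWm : Measurable W := (measurable_lipD_iter F hF n 0).comp (hrot _).measurable
    have hWe : ∀ᵐ ω ∂P, lipConst (iterBack f n ((n + 1 : ℕ) : ℤ) ω) = W ω ∧ W ω < ⊤ := by
      filter_upwards [hLipA] with ω hω
      have h1 := iterBack_lip f ω hω n ((n + 1 : ℕ) : ℤ)
      have h2 : W ω = lipConst (iterBack f n ((n + 1 : ℕ) : ℤ) ω) := by
        rw [← lipD_eq _ h1, hW]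
        show lipD _ = lipD _
        congr 1
        funext x
        exact (hitr _ _ _ _).symm
      exact ⟨h2.symm, h2 ▸ h1⟩
    have heW : eLogExp P (fun ω => lipConst (iterBack f n ((n + 1 : ℕ) : ℤ) ω)) = eLogExp P W := by
      unfold eLogExp
      congr 2
      · refine lintegral_congr_ae ?_
        filter_upwards [hWe] with ω hω
        rw [hω.1]
      · refine lintegral_congr_ae ?_
        filter_upwards [hWe] with ω hω
        rw [hω.1]
    rw [heW] at hlt'
    obtain ⟨K, hK⟩ := exists_trunc P W hWm (hWe.mono fun ω h => h.2) (n + 1) hn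
      (fun K => (hrot ((n + 1 : ℕ) : ℤ)).integrable_comp_of_integrable (hai K (n + 1))) hlt'
    refine ⟨K, ?_⟩
    have hm := hrot ((n + 1 : ℕ) : ℤ)
    rw [← hm.map_eq, integral_map hm.measurable.aemeasurable (ham K (n + 1)).aestronglyMeasurable]
    exact hK
  obtain ⟨δ, hδ, hdecay⟩ := subadd_decay hS (aSeq F K) (ham K) (hai K) (hsub K) n hn hKneg
  -- growth of the displacement
  set h0 : (ℤ → E1 × E2) → ℝ := fun w => logPlus (dist x₀ (pm F 0 w x₀)) with hh0
  have hh0m : Measurable h0 :=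
    (Real.measurable_log.comp (measurable_const.dist (measurable_iter F hF 0 x₀ 0))).max
      measurable_const
  have hh0i : Integrable h0 Q := by
    rw [hQ, integrable_map_measure hh0m.aestronglyMeasurable hΨ.aemeasurable]
    refine hlogd.congr (Eventually.of_forall fun ω => ?_)
    simp only [Function.comp_apply, hh0, hfΨ]
  have hgrow := orbit_sublinear hS hh0m hh0i (half_pos hδ)
  have hdecay' : ∀ t, ∀ᵐ ω ∂P, ∃ C : ℝ, 0 ≤ C ∧ ∀ k x y,
      dist (iterBack f k t ω x) (iterBack f k t ω y) ≤ C * Real.exp (-(δ * k)) * dist x y := by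
    intro t
    filter_upwards [(hrot t).quasiMeasurePreserving.ae hdecay, hLipA] with ω hω hL
    obtain ⟨C, hC⟩ := hω
    refine ⟨Real.exp C, (Real.exp_pos _).le, fun k x y => ?_⟩
    have h1 := iterBack_lip f ω hL k t
    have h2 := (lipschitz_of_lipConst _ h1).dist_le_mul x y
    refine h2.trans ?_
    refine mul_le_mul_of_nonneg_right ?_ dist_nonneg
    have h3 := lipD_toReal_le F K k (rot t (Ψ ω))
    have e : iterBack (pm F) k 0 (rot t (Ψ ω)) = iterBack f k t ω :=
      funext fun x => (hitr k t ω x).symm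
    rw [e, lipD_eq _ h1] at h3
    refine le_trans h3 ?_
    rw [← Real.exp_add]
    refine Real.exp_le_exp.2 ((hC (k + 1)).trans ?_)
    push_cast
    nlinarith
  have hgrow' : ∀ t : ℤ, ∀ᵐ ω ∂P, ∃ C : ℝ, 0 ≤ C ∧ ∀ k : ℕ,
      dist x₀ (f (t - k) ω x₀) ≤ C * Real.exp (δ / 2 * k) := by
    intro t
    filter_upwards [(hrot t).quasiMeasurePreserving.ae hgrow] with ω hω
    obtain ⟨C, hC⟩ := hω
    refine ⟨Real.exp C, (Real.exp_pos _).le, fun k => ?_⟩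
    have h1 := hC k
    rw [rot_iter, rot_rot] at h1
    have e : pm F 0 (rot (-(k : ℤ) + t) (Ψ ω)) x₀ = f (t - k) ω x₀ := by
      have := pm_rot F (-(k : ℤ) + t) (Ψ ω) 0 0 x₀
      have e2 : (0 : ℤ) + (-(k : ℤ) + t) = t - k := by ring
      rw [e2] at this
      rw [hfΨ]; exact this
    simp only [hh0, e] at h1
    rw [← Real.exp_add]
    rcases (dist_nonneg (x := x₀) (y := f (t - k) ω x₀)).eq_or_lt with h2 | h2
    · rw [← h2]; exact (Real.exp_pos _).le
    · exact (Real.log_le_iff_le_exp h2).1 ((le_max_left _ _).trans h1)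
  set G : (ℤ → E1 × E2) → E := fun w => limUnder atTop fun k : ℕ => iterBack (pm F) k 0 w x₀ with hG
  have hGm : Measurable G :=
    (StronglyMeasurable.limUnder fun k => (measurable_iter F hF k x₀ 0).stronglyMeasurable).measurable
  set X : ℤ → Ω → E := fun t ω => G (rot t (Ψ ω)) with hX
  have hXm : ∀ t, Measurable (X t) := fun t => hGm.comp (hrot t).measurable
  have hconv0 : ∀ t, ∀ᵐ ω ∂P, Tendsto (fun k : ℕ => iterBack f k t ω x₀) atTop (𝓝 (X t ω)) := by
    intro t
    filter_upwards [hdecay' t, hgrow' t] with ω h1 h2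
    obtain ⟨C, hC0, hC⟩ := h1
    obtain ⟨D, hD0, hD⟩ := h2
    have hc : CauchySeq fun k : ℕ => iterBack f k t ω x₀ := by
      refine cauchySeq_of_le_geometric (Real.exp (-(δ / 2))) (C * D * Real.exp (δ / 2))
        (by rw [Real.exp_lt_one_iff]; linarith) fun k => ?_
      have e : iterBack f (k + 1) t ω x₀ = iterBack f k t ω (f (t - k - 1) ω x₀) :=
        iterBack_add f k 0 ω x₀ t
      rw [e]
      refine (hC k _ _).trans ?_
      have h3 := hD (k + 1)
      have e2 : t - ((k + 1 : ℕ) : ℤ) = t - k - 1 := by push_cast; ring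
      rw [e2] at h3
      calc C * Real.exp (-(δ * k)) * dist x₀ (f (t - k - 1) ω x₀)
          ≤ C * Real.exp (-(δ * k)) * (D * Real.exp (δ / 2 * ((k + 1 : ℕ) : ℝ))) := by gcongr
        _ = C * D * (Real.exp (-(δ * k)) * Real.exp (δ / 2 * ((k + 1 : ℕ) : ℝ))) := by ring
        _ = C * D * (Real.exp (δ / 2) * Real.exp (-(δ / 2)) ^ k) := by
            rw [← Real.exp_nat_mul, ← Real.exp_add, ← Real.exp_add]
            congr 2
            push_cast; ring
        _ = _ := by ring
    have h5 := tendsto_nhds_limUnder (cauchySeq_tendsto_of_complete hc)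
    have e : X t ω = limUnder atTop fun k : ℕ => iterBack f k t ω x₀ := by
      simp only [hX, hG, hitr]
    rw [e]; exact h5
  have hexp0 : Tendsto (fun k : ℕ => Real.exp (-(δ * k))) atTop (𝓝 0) :=
    Real.tendsto_exp_neg_atTop_nhds_zero.comp
      (Tendsto.const_mul_atTop hδ tendsto_natCast_atTop_atTop)
  refine ⟨X, hXm, ?_, ?_, ?_, ?_⟩
  · intro x t
    filter_upwards [hdecay' t, hconv0 t] with ω h1 h2
    obtain ⟨C, hC0, hC⟩ := h1
    refine h2.congr_dist ?_
    have h3 : Tendsto (fun k : ℕ => C * Real.exp (-(δ * k)) * dist x₀ x) atTop (𝓝 0) := by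
      simpa using (hexp0.const_mul C).mul_const (dist x₀ x)
    exact squeeze_zero (fun _ => dist_nonneg) (fun k => hC k _ _) h3
  · intro t
    filter_upwards [hconv0 t, hconv0 (t - 1), hLip t] with ω h1 h2 h3
    have hc : Continuous (f t ω) := (lipschitz_of_lipConst _ h3).continuous
    have h4 : Tendsto (fun k : ℕ => iterBack f (k + 1) t ω x₀) atTop (𝓝 (f t ω (X (t - 1) ω))) :=
      (hc.tendsto _).comp h2
    have h5 := (tendsto_add_atTop_iff_nat 1).2 h1
    rw [← hf]
    exact tendsto_nhds_unique h5 h4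
  · set Φ : (ℤ → E1 × E2) → (ℤ → E) := fun w t => G (rot t w) with hΦ
    have hΦm : Measurable Φ := measurable_pi_lambda _ fun t => hGm.comp (measurable_rot t)
    have hmp : MeasurePreserving Φ Q (P.map fun ω t => X t ω) := by
      refine ⟨hΦm, ?_⟩
      rw [hQ, Measure.map_map hΦm hΨ]
      rfl
    refine hmp.ergodic_of_ergodic_semiconj hstat (measurable_rot 1) ?_
    intro w
    funext t
    show G (rot t (rot 1 w)) = G (rot (t + 1) w)
    rw [rot_rot]
  · intro Y hY hYstat hYrec t
    have hYm : Measurable fun ω (t : ℤ) => Y t ω := measurable_pi_lambda _ hY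
    have hlaw1 : ∀ s, P.map (Y (s + 1)) = P.map (Y s) := by
      intro s
      have h1 := congrArg (Measure.map fun y : ℤ → E => y s) hYstat.map_eq
      rw [Measure.map_map (measurable_pi_apply s) hYstat.measurable,
        Measure.map_map ((measurable_pi_apply s).comp hYstat.measurable) hYm,
        Measure.map_map (measurable_pi_apply s) hYm] at h1
      exact h1
    have hlaw : ∀ k : ℕ, P.map (Y (t - k - 1)) = P.map (Y t) := by
      intro k
      induction k with
      | zero =>
        have := hlaw1 (t - 1)
        rw [sub_add_cancel] at this
        simpa using this.symm
      | succ k ih =>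
        have h1 := hlaw1 (t - ((k + 1 : ℕ) : ℤ) - 1)
        have e : t - ((k + 1 : ℕ) : ℤ) - 1 + 1 = t - k - 1 := by push_cast; ring
        rw [e] at h1
        rw [← h1, ih]
    have hYit : ∀ᵐ ω ∂P, ∀ (k : ℕ) (t : ℤ), Y t ω = iterBack f k t ω (Y (t - k - 1) ω) := by
      filter_upwards [ae_all_iff.2 hYrec] with ω hω k
      induction k with
      | zero => intro t; rw [hω t, ← hf]; simp [iterBack]
      | succ k ih =>
        intro t
        rw [hω t, ← hf, ih (t - 1)]
        have e : t - 1 - (k : ℤ) - 1 = t - ((k + 1 : ℕ) : ℤ) - 1 := by push_cast; ring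
        rw [e]
        rfl
    have hnull : P {ω | Y t ω ≠ X t ω} = 0 := by
      refine null_of_tight P (fun k ω => dist (Y (t - k - 1) ω) x₀) (fun ω => dist (Y t ω) x₀)
        ((hY t).dist measurable_const) ?_ _ ?_
      · intro k M
        have hms : MeasurableSet {y : E | (M : ℝ) < dist y x₀} :=
          measurableSet_lt measurable_const (measurable_id.dist measurable_const)
        have h1 := congrArg (fun ν : Measure E => ν {y : E | (M : ℝ) < dist y x₀}) (hlaw k)
        rw [Measure.map_apply (hY _) hms, Measure.map_apply (hY _) hms] at h1
        exact h1
      · filter_upwards [hYit, hdecay' t, hconv0 t] with ω h1 h2 h3 hne' M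
        obtain ⟨C, hC0, hC⟩ := h2
        by_contra hev
        rw [not_eventually] at hev
        have hpos : 0 < dist (Y t ω) (X t ω) := dist_pos.2 hne'
        have h4 : Tendsto (fun k : ℕ => C * Real.exp (-(δ * k)) * M
            + dist (iterBack f k t ω x₀) (X t ω)) atTop (𝓝 0) := by
          have h5 := ((hexp0.const_mul C).mul_const (M : ℝ)).add (tendsto_iff_dist_tendsto_zero.1 h3)
          simpa using h5
        obtain ⟨k, hk1, hk2⟩ := (hev.and_eventually (h4.eventually (gt_mem_nhds hpos))).exists
        rw [not_lt] at hk1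
        have h6 := hC k (Y (t - k - 1) ω) x₀
        rw [← h1 k t] at h6
        have h7 : C * Real.exp (-(δ * k)) * dist (Y (t - k - 1) ω) x₀
            ≤ C * Real.exp (-(δ * k)) * M := by gcongr
        have h8 := dist_triangle (Y t ω) (iterBack f k t ω x₀) (X t ω)
        linarith
    exact ae_iff.2 hnull

end
end

section
/- Suppose Assumptions CH1 and CH2 hold, that for every t ∈ ℤ the noise ε_t is independent of ℱ_{t−1} = σ((Z_s, ε_s) : s ≤ t−1), and that there exist x̄ ∈ ℝ^q and p ≥ 1 such that f₁(x̄, Z₀) + ε₁ f₂(x̄, Z₀) has finite L^p norm and Σ_{i=1}^q sup_z ‖a_{i,1}(z) + a_{i,2}(z)|ε₁|‖_p < 1. Then there exists a unique stationary and non-anticipative process (Y_t)_{t∈ℤ} solving the CHARN recursion; it is ergodic and satisfies E|Y₁|^p < ∞. -/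
open MeasureTheory Filter Topology ProbabilityTheory
open scoped ENNReal NNReal

noncomputable section

/-- Shift by an arbitrary integer. -/
def shiftBy {α : Type*} (t : ℤ) (x : ℤ → α) : ℤ → α := fun s => x (s + t)

lemma measurable_pathShift {α : Type*} [MeasurableSpace α] :
    Measurable (pathShift : (ℤ → α) → ℤ → α) :=
  measurable_pi_lambda _ fun t => measurable_pi_apply (t + 1)

lemma measurable_shiftBy {α : Type*} [MeasurableSpace α] (t : ℤ) :
    Measurable (shiftBy t : (ℤ → α) → ℤ → α) :=
  measurable_pi_lambda _ fun s => measurable_pi_apply (s + t)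

lemma map_shiftBy {α : Type*} [MeasurableSpace α] {μ : Measure (ℤ → α)}
    (h : MeasurePreserving pathShift μ μ) (t : ℤ) : μ.map (shiftBy t) = μ := by
  induction t using Int.induction_on with
  | zero =>
    have : (shiftBy 0 : (ℤ → α) → ℤ → α) = id := by
      funext x s; simp [shiftBy]
    rw [this, Measure.map_id]
  | succ k ih =>
    have : (shiftBy ((k : ℤ) + 1) : (ℤ → α) → ℤ → α) = pathShift ∘ shiftBy (k : ℤ) := by
      funext x s; simp only [shiftBy, pathShift, Function.comp]; congr 1; ring
    rw [this, ← Measure.map_map measurable_pathShift (measurable_shiftBy _), ih, h.map_eq]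
  | pred k ih =>
    have : (shiftBy (-(k : ℤ)) : (ℤ → α) → ℤ → α) = shiftBy (-(k : ℤ) - 1) ∘ pathShift := by
      funext x s; simp only [shiftBy, pathShift, Function.comp]; congr 1; ring
    rw [this, ← Measure.map_map (measurable_shiftBy _) measurable_pathShift, h.map_eq] at ih
    exact ih

/-- Law of any path functional is shift invariant. -/
lemma eLpNorm_stationary {Ω α : Type*} [MeasurableSpace Ω] [MeasurableSpace α] {P : Measure Ω}
    {X : ℤ → Ω → α} (hX : ∀ t, Measurable (X t))
    (h : MeasurePreserving pathShift (P.map fun ω t => X t ω) (P.map fun ω t => X t ω))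
    {g : (ℤ → α) → ℝ} (hg : Measurable g) (r : ℝ≥0∞) (t : ℤ) :
    eLpNorm (fun ω => g (fun s => X (s + t) ω)) r P = eLpNorm (fun ω => g (fun s => X s ω)) r P := by
  have hW : Measurable (fun ω (t : ℤ) => X t ω) := measurable_pi_lambda _ hX
  have e1 := eLpNorm_map_measure (p := r) (μ := P) (f := fun ω (t : ℤ) => X t ω) (g := g)
    hg.aestronglyMeasurable hW.aemeasurable
  have e2 := eLpNorm_map_measure (p := r) (μ := P) (f := fun ω (t : ℤ) => X t ω)
    (g := g ∘ shiftBy t)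
    (hg.comp (measurable_shiftBy t)).aestronglyMeasurable hW.aemeasurable
  have e3 := eLpNorm_map_measure (p := r) (μ := P.map fun ω (t : ℤ) => X t ω) (f := shiftBy t)
    (g := g) hg.aestronglyMeasurable (measurable_shiftBy t).aemeasurable
  rw [map_shiftBy h t] at e3
  calc _ = eLpNorm ((g ∘ shiftBy t) ∘ fun ω (t : ℤ) => X t ω) r P := rfl
    _ = eLpNorm (g ∘ fun ω (t : ℤ) => X t ω) r P := by rw [← e2, ← e3, e1]
    _ = _ := rfl

/-- The one-step innovation bound. -/
lemma inner_bound {q : ℕ} (ν : Measure ℝ) [IsProbabilityMeasure ν] (p : ℝ) (hp : 1 ≤ p)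
    (c₁ c₂ b d : Fin q → ℝ) (hc₁ : ∀ i, 0 ≤ c₁ i) (hc₂ : ∀ i, 0 ≤ c₂ i) (hb : ∀ i, 0 ≤ b i)
    (hint : ∀ i, Integrable (fun e => (c₁ i + c₂ i * |e|) ^ p) ν)
    (hle : ∀ i, ∫ e, (c₁ i + c₂ i * |e|) ^ p ∂ν ≤ b i ^ p)
    (g : ℝ → ℝ) (hg : ∀ e, |g e| ≤ ∑ i, (c₁ i + c₂ i * |e|) * |d i|) :
    eLpNorm g (ENNReal.ofReal p) ν ≤ ∑ i, ENNReal.ofReal (b i) * ‖d i‖ₑ := by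
  have hp0 : 0 < p := by linarith
  have hp1 : 1 ≤ ENNReal.ofReal p := by simpa using ENNReal.ofReal_le_ofReal hp
  have hpz : ENNReal.ofReal p ≠ 0 := by simpa using hp0
  have hpt : ENNReal.ofReal p ≠ ∞ := ENNReal.ofReal_ne_top
  have hpr : (ENNReal.ofReal p).toReal = p := ENNReal.toReal_ofReal hp0.le
  have hm : ∀ i, Measurable (fun e : ℝ => c₁ i + c₂ i * |e|) := fun i => by fun_prop
  have hn : ∀ i (e : ℝ), 0 ≤ c₁ i + c₂ i * |e| := fun i e =>
    add_nonneg (hc₁ i) (mul_nonneg (hc₂ i) (abs_nonneg e))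
  have h0 : ∀ i, eLpNorm (fun e : ℝ => c₁ i + c₂ i * |e|) (ENNReal.ofReal p) ν
      ≤ ENNReal.ofReal (b i) := by
    intro i
    rw [eLpNorm_eq_lintegral_rpow_enorm_toReal hpz hpt, hpr, one_div, ENNReal.rpow_inv_le_iff hp0,
      ENNReal.ofReal_rpow_of_nonneg (hb i) hp0.le]
    refine le_trans (le_of_eq ?_) (ENNReal.ofReal_le_ofReal (hle i))
    rw [ofReal_integral_eq_lintegral_ofReal (hint i)
      (Filter.Eventually.of_forall fun e => Real.rpow_nonneg (hn i e) p)]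
    refine lintegral_congr fun e => ?_
    rw [Real.enorm_eq_ofReal (hn i e), ENNReal.ofReal_rpow_of_nonneg (hn i e) hp0.le]
  calc eLpNorm g (ENNReal.ofReal p) ν
      ≤ eLpNorm (∑ i, |d i| • fun e : ℝ => c₁ i + c₂ i * |e|) (ENNReal.ofReal p) ν := by
        refine eLpNorm_mono_real fun e => ?_
        simp only [Real.norm_eq_abs, Finset.sum_apply, Pi.smul_apply, smul_eq_mul]
        refine (hg e).trans (le_of_eq (Finset.sum_congr rfl fun i _ => mul_comm _ _))
    _ ≤ ∑ i, eLpNorm (|d i| • fun e : ℝ => c₁ i + c₂ i * |e|) (ENNReal.ofReal p) ν :=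
        eLpNorm_sum_le (fun i _ => ((hm i).const_smul _).aestronglyMeasurable) hp1
    _ ≤ _ := by
        refine Finset.sum_le_sum fun i _ => ?_
        rw [eLpNorm_const_smul, mul_comm, show ‖|d i|‖ₑ = ‖d i‖ₑ from enorm_norm (d i)]
        gcongr
        exact h0 i

lemma measurable_pi_aux {α ι : Type*} {m : MeasurableSpace α} {U : ι → α → ℝ}
    (hU : ∀ i, Measurable (U i)) : Measurable (fun x i => U i x) :=
  measurable_pi_lambda _ hU

lemma measurable_limUnder_aux {α : Type*} {m : MeasurableSpace α} {U : ℕ → α → ℝ}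
    (hU : ∀ i, Measurable (U i)) : Measurable (fun x => limUnder atTop (fun n => U n x)) :=
  (StronglyMeasurable.limUnder (fun i => (hU i).stronglyMeasurable)).measurable

lemma measurable_step_aux {α E1 : Type*} {q : ℕ} {m : MeasurableSpace α} [MeasurableSpace E1]
    {f₁ f₂ : (Fin q → ℝ) → E1 → ℝ}
    (hf₁ : Measurable fun z : (Fin q → ℝ) × E1 => f₁ z.1 z.2)
    (hf₂ : Measurable fun z : (Fin q → ℝ) × E1 => f₂ z.1 z.2)
    {U : Fin q → α → ℝ} (hU : ∀ i, Measurable (U i)) {ζ : α → E1} (hζ : Measurable ζ)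
    {e : α → ℝ} (he : Measurable e) :
    Measurable (fun x => f₁ (fun i => U i x) (ζ x) + e x * f₂ (fun i => U i x) (ζ x)) := by
  have k : Measurable fun x => ((fun i => U i x), ζ x) := (measurable_pi_aux hU).prodMk hζ
  exact (hf₁.comp k).add (he.mul (hf₂.comp k))

/-- The Picard iterates of the recursion, as functionals of the path. -/
def charnIter {E1 : Type*} {q : ℕ} (f₁ f₂ : (Fin q → ℝ) → E1 → ℝ) : ℕ → (ℤ → E1 × ℝ) → ℝ
  | 0 => fun _ => 0
  | n + 1 => fun w =>
      f₁ (fun i : Fin q => charnIter f₁ f₂ n (shiftBy (-1 - (i : ℤ)) w)) (w (-1)).1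
        + (w 0).2 * f₂ (fun i : Fin q => charnIter f₁ f₂ n (shiftBy (-1 - (i : ℤ)) w)) (w (-1)).1

lemma shiftBy_shiftBy {α : Type*} (s t : ℤ) (w : ℤ → α) :
    shiftBy s (shiftBy t w) = shiftBy (s + t) w := by
  funext x; simp [shiftBy, add_assoc]

lemma charnIter_succ {E1 : Type*} {q : ℕ} (f₁ f₂ : (Fin q → ℝ) → E1 → ℝ) (n : ℕ) (t : ℤ)
    (w : ℤ → E1 × ℝ) : charnIter f₁ f₂ (n + 1) (shiftBy t w) =
      f₁ (fun i : Fin q => charnIter f₁ f₂ n (shiftBy (t - 1 - (i : ℤ)) w)) (w (t - 1)).1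
      + (w t).2 * f₂ (fun i : Fin q => charnIter f₁ f₂ n (shiftBy (t - 1 - (i : ℤ)) w))
          (w (t - 1)).1 := by
  have h : ∀ i : Fin q, (-1 - (i : ℤ)) + t = t - 1 - (i : ℤ) := fun i => by ring
  have h2 : (-1 : ℤ) + t = t - 1 := by ring
  simp only [charnIter, shiftBy_shiftBy, h]
  simp only [shiftBy, h2, zero_add]

lemma measurable_charnIter {E1 : Type*} {q : ℕ} [MeasurableSpace E1]
    {f₁ f₂ : (Fin q → ℝ) → E1 → ℝ}
    (hf₁ : Measurable fun z : (Fin q → ℝ) × E1 => f₁ z.1 z.2)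
    (hf₂ : Measurable fun z : (Fin q → ℝ) × E1 => f₂ z.1 z.2) (n : ℕ) :
    Measurable (charnIter f₁ f₂ n) := by
  induction n with
  | zero => exact measurable_const
  | succ n ih =>
    exact measurable_step_aux hf₁ hf₂ (fun i => ih.comp (measurable_shiftBy _))
      (measurable_fst.comp (measurable_pi_apply (-1))) (measurable_snd.comp (measurable_pi_apply 0))

/-- Almost sure convergence of a sequence whose increments are summable in `L^p`. -/
lemma ae_tendsto_aux {Ω : Type*} [MeasurableSpace Ω] {P : Measure Ω} [IsProbabilityMeasure P]
    {r : ℝ≥0∞} (hr : 1 ≤ r) {X : ℕ → Ω → ℝ} (hX : ∀ n, Measurable (X n)) {B : ℕ → ℝ≥0∞}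
    (hB : ∑' n, B n ≠ ∞) (hinc : ∀ n, eLpNorm (fun ω => X (n + 1) ω - X n ω) r P ≤ B n) :
    ∀ᵐ ω ∂P, Tendsto (fun n => X n ω) atTop (𝓝 (limUnder atTop fun n => X n ω)) := by
  have hm : ∀ n, Measurable fun ω => ‖X (n + 1) ω - X n ω‖ₑ := fun n =>
    ((hX (n + 1)).sub (hX n)).enorm
  have h1 : ∫⁻ ω, ∑' n, ‖X (n + 1) ω - X n ω‖ₑ ∂P ≠ ∞ := by
    rw [lintegral_tsum fun n => (hm n).aemeasurable]
    refine ne_top_of_le_ne_top hB (ENNReal.tsum_le_tsum fun n => ?_)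
    rw [← eLpNorm_one_eq_lintegral_enorm]
    exact (eLpNorm_le_eLpNorm_of_exponent_le hr
      ((hX (n + 1)).sub (hX n)).aestronglyMeasurable).trans (hinc n)
  filter_upwards [ae_lt_top (Measurable.tsum hm) h1] with ω hω
  have hc : CauchySeq fun n => X n ω :=
    cauchySeq_of_edist_le_of_tsum_ne_top _
      (fun n => by rw [edist_comm, edist_eq_enorm_sub]) hω.ne
  exact hc.tendsto_limUnder

/-- Contraction estimate in `L^p`. -/
lemma contraction {Ω E1 : Type*} {q : ℕ} (m : MeasurableSpace Ω) [m0 : MeasurableSpace Ω] [MeasurableSpace E1]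
    (P : Measure Ω) [IsProbabilityMeasure P]
    (f₁ f₂ : (Fin q → ℝ) → E1 → ℝ)
    (hf₁ : Measurable fun z : (Fin q → ℝ) × E1 => f₁ z.1 z.2)
    (hf₂ : Measurable fun z : (Fin q → ℝ) × E1 => f₂ z.1 z.2)
    (p : ℝ) (hp : 1 ≤ p) (b : Fin q → ℝ) (hb : ∀ i, 0 ≤ b i)
    (e : Ω → ℝ) (he : Measurable e)
    (hin : ∀ (y y' : Fin q → ℝ) (z : E1),
      eLpNorm (fun x => f₁ y z + x * f₂ y z - (f₁ y' z + x * f₂ y' z)) (ENNReal.ofReal p) (P.map e)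
        ≤ ∑ i, ENNReal.ofReal (b i) * ‖y i - y' i‖ₑ)
    (hm : m ≤ m0)
    (hind : Indep (MeasurableSpace.comap e inferInstance) m P)
    (ζ : Ω → E1) (hζ : Measurable[m] ζ)
    (U V : Fin q → Ω → ℝ) (hU : ∀ i, Measurable[m] (U i)) (hV : ∀ i, Measurable[m] (V i)) :
    eLpNorm (fun ω => f₁ (fun i => U i ω) (ζ ω) + e ω * f₂ (fun i => U i ω) (ζ ω)
      - (f₁ (fun i => V i ω) (ζ ω) + e ω * f₂ (fun i => V i ω) (ζ ω))) (ENNReal.ofReal p) P ≤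
    ∑ i, ENNReal.ofReal (b i) * eLpNorm (fun ω => U i ω - V i ω) (ENNReal.ofReal p) P := by
  have hp0 : 0 < p := by linarith
  have hpz : ENNReal.ofReal p ≠ 0 := by simpa using hp0
  have hpt : ENNReal.ofReal p ≠ ∞ := ENNReal.ofReal_ne_top
  have hpr : (ENNReal.ofReal p).toReal = p := ENNReal.toReal_ofReal hp0.le
  let S : Ω → ((Fin q → ℝ) × (Fin q → ℝ)) × E1 :=
    fun ω => ((fun i => U i ω, fun i => V i ω), ζ ω)
  have hSm : Measurable[m] S := by
    refine Measurable.prodMk (Measurable.prodMk ?_ ?_) hζ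
    · exact measurable_pi_aux hU
    · exact measurable_pi_aux hV
  have hS : Measurable S := hSm.mono hm le_rfl
  have hindf : IndepFun S e P := by
    rw [IndepFun_iff_Indep]
    exact (indep_of_indep_of_le_right hind hSm.comap_le).symm
  let G : (((Fin q → ℝ) × (Fin q → ℝ)) × E1) × ℝ → ℝ := fun x =>
    f₁ x.1.1.1 x.1.2 + x.2 * f₂ x.1.1.1 x.1.2 - (f₁ x.1.1.2 x.1.2 + x.2 * f₂ x.1.1.2 x.1.2)
  have hG : Measurable G := by
    have k1 : Measurable fun x : (((Fin q → ℝ) × (Fin q → ℝ)) × E1) × ℝ => (x.1.1.1, x.1.2) := by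
      fun_prop
    have k2 : Measurable fun x : (((Fin q → ℝ) × (Fin q → ℝ)) × E1) × ℝ => (x.1.1.2, x.1.2) := by
      fun_prop
    exact ((hf₁.comp k1).add (measurable_snd.mul (hf₂.comp k1))).sub
      ((hf₁.comp k2).add (measurable_snd.mul (hf₂.comp k2)))
  have hprod := (indepFun_iff_map_prod_eq_prod_map_map hS.aemeasurable he.aemeasurable).1 hindf
  have : IsProbabilityMeasure (P.map e) := Measure.isProbabilityMeasure_map he.aemeasurable
  have key : ∫⁻ ω, ‖G (S ω, e ω)‖ₑ ^ p ∂P ≤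
      ∫⁻ ω, (∑ i, ENNReal.ofReal (b i) * ‖U i ω - V i ω‖ₑ) ^ p ∂P := by
    have hGe : Measurable fun x => ‖G x‖ₑ ^ p := hG.enorm.pow_const p
    calc ∫⁻ ω, ‖G (S ω, e ω)‖ₑ ^ p ∂P
        = ∫⁻ x, ‖G x‖ₑ ^ p ∂(P.map fun ω => (S ω, e ω)) :=
          (lintegral_map hGe (hS.prodMk he)).symm
      _ = ∫⁻ s, ∫⁻ x, ‖G (s, x)‖ₑ ^ p ∂(P.map e) ∂(P.map S) := by
          rw [hprod, lintegral_prod _ hGe.aemeasurable]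
      _ = ∫⁻ ω, ∫⁻ x, ‖G (S ω, x)‖ₑ ^ p ∂(P.map e) ∂P :=
          lintegral_map hGe.lintegral_prod_right' hS
      _ ≤ _ := by
          refine lintegral_mono fun ω => ?_
          have h2 := hin (fun i => U i ω) (fun i => V i ω) (ζ ω)
          rw [eLpNorm_eq_lintegral_rpow_enorm_toReal hpz hpt, hpr, one_div,
            ENNReal.rpow_inv_le_iff hp0] at h2
          exact h2
  have hp1 : 1 ≤ ENNReal.ofReal p := by simpa using ENNReal.ofReal_le_ofReal hp
  have hDm : ∀ i, Measurable (fun ω => |U i ω - V i ω|) := fun i =>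
    (((hU i).mono hm le_rfl).sub ((hV i).mono hm le_rfl)).abs
  calc _ ≤ eLpNorm (∑ i, b i • fun ω => |U i ω - V i ω|) (ENNReal.ofReal p) P := by
        rw [eLpNorm_eq_lintegral_rpow_enorm_toReal hpz hpt,
          eLpNorm_eq_lintegral_rpow_enorm_toReal hpz hpt, hpr]
        refine ENNReal.rpow_le_rpow (key.trans (le_of_eq (lintegral_congr fun ω => ?_)))
          (by positivity)
        congr 1
        simp only [Finset.sum_apply, Pi.smul_apply, smul_eq_mul]
        rw [Real.enorm_eq_ofReal (Finset.sum_nonneg fun i _ => mul_nonneg (hb i) (abs_nonneg _)),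
          ENNReal.ofReal_sum_of_nonneg fun i _ => mul_nonneg (hb i) (abs_nonneg _)]
        refine Finset.sum_congr rfl fun i _ => ?_
        rw [ENNReal.ofReal_mul (hb i), Real.enorm_eq_ofReal_abs]
    _ ≤ ∑ i, eLpNorm (b i • fun ω => |U i ω - V i ω|) (ENNReal.ofReal p) P :=
        eLpNorm_sum_le (fun i _ => ((hDm i).const_smul _).aestronglyMeasurable) hp1
    _ = _ := by
        refine Finset.sum_congr rfl fun i _ => ?_
        rw [eLpNorm_const_smul, Real.enorm_eq_ofReal (hb i)]
        congr 1
        exact eLpNorm_norm (fun ω => U i ω - V i ω)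

/-- Proposition 4.1, part 2: under Assumptions CH1–CH2, predetermined
innovations, a moment condition and `Σ_i sup_z ‖a_{i,1}(z) + a_{i,2}(z)|ε₁|‖_p < 1`, the
CHARN model has a unique stationary non-anticipative solution, which is ergodic and has a
finite moment of order `p`. -/
theorem charn_lp_solution
    {Ω E1 : Type*} {q : ℕ} [m0 : MeasurableSpace Ω] [MeasurableSpace E1]
    (P : Measure Ω) [IsProbabilityMeasure P]
    (hq : 0 < q)
    (Z : ℤ → Ω → E1) (ε : ℤ → Ω → ℝ)
    (hZmeas : ∀ t, Measurable (Z t)) (hεmeas : ∀ t, Measurable (ε t))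
    -- Assumption CH1 : ((Z_t, ε_t)) stationary and ergodic
    (hstat : Ergodic pathShift (P.map (fun ω (t : ℤ) => (Z t ω, ε t ω))))
    -- ε_t independent of ℱ_{t-1} = σ((Z_s, ε_s) : s ≤ t-1)
    (hindep : ∀ t : ℤ, Indep (MeasurableSpace.comap (ε t) inferInstance)
      (⨆ (s : ℤ) (_ : s ≤ t - 1),
        MeasurableSpace.comap (fun ω => (Z s ω, ε s ω)) inferInstance) P)
    -- the CHARN model
    (f₁ f₂ : (Fin q → ℝ) → E1 → ℝ)
    (hf₁ : Measurable fun z : (Fin q → ℝ) × E1 => f₁ z.1 z.2)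
    (hf₂ : Measurable fun z : (Fin q → ℝ) × E1 => f₂ z.1 z.2)
    -- Assumption CH2
    (a₁ a₂ : Fin q → E1 → ℝ)
    (ha₁pos : ∀ i z, 0 ≤ a₁ i z) (ha₂pos : ∀ i z, 0 ≤ a₂ i z)
    (hCH2₁ : ∀ (y y' : Fin q → ℝ) (z : E1),
      |f₁ y z - f₁ y' z| ≤ ∑ i : Fin q, a₁ i z * |y i - y' i|)
    (hCH2₂ : ∀ (y y' : Fin q → ℝ) (z : E1),
      |f₂ y z - f₂ y' z| ≤ ∑ i : Fin q, a₂ i z * |y i - y' i|)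
    -- moment condition at some point x̄ and contraction of the L^p norms
    (p : ℝ) (hp : 1 ≤ p) (xbar : Fin q → ℝ)
    (hmom : Integrable (fun ω => |f₁ xbar (Z 0 ω) + ε 1 ω * f₂ xbar (Z 0 ω)| ^ p) P)
    (hcoefint : ∀ (i : Fin q) (z : E1),
      Integrable (fun ω => (a₁ i z + a₂ i z * |ε 1 ω|) ^ p) P)
    -- Σ_{i=1}^q sup_z ‖a_{i,1}(z) + a_{i,2}(z)|ε₁|‖_p < 1
    (b : Fin q → ℝ) (hb0 : ∀ i, 0 ≤ b i) (hbsum : ∑ i, b i < 1)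
    (hbb : ∀ (i : Fin q) (z : E1),
      ∫ ω, (a₁ i z + a₂ i z * |ε 1 ω|) ^ p ∂P ≤ b i ^ p) :
    ∃ Y : ℤ → Ω → ℝ,
      -- Y is non-anticipative
      (∀ t : ℤ, Measurable[⨆ (s : ℤ) (_ : s ≤ t),
        MeasurableSpace.comap (fun ω => (Z s ω, ε s ω)) inferInstance] (Y t)) ∧
      -- Y solves the CHARN recursion
      (∀ t : ℤ, ∀ᵐ ω ∂P,
        Y t ω = f₁ (fun i : Fin q => Y (t - 1 - (i : ℤ)) ω) (Z (t - 1) ω)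
          + ε t ω * f₂ (fun i : Fin q => Y (t - 1 - (i : ℤ)) ω) (Z (t - 1) ω)) ∧
      -- Y is stationary and ergodic
      Ergodic pathShift (P.map (fun ω (t : ℤ) => Y t ω)) ∧
      -- E|Y₁|^p < ∞
      Integrable (fun ω => |Y 1 ω| ^ p) P ∧
      -- uniqueness among stationary non-anticipative solutions with finite p-th moment
      (∀ Y' : ℤ → Ω → ℝ,
        (∀ t : ℤ, Measurable[⨆ (s : ℤ) (_ : s ≤ t),
          MeasurableSpace.comap (fun ω => (Z s ω, ε s ω)) inferInstance] (Y' t)) →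
        MeasurePreserving pathShift
          (P.map (fun ω (t : ℤ) => Y' t ω)) (P.map (fun ω (t : ℤ) => Y' t ω)) →
        (∀ t : ℤ, ∀ᵐ ω ∂P,
          Y' t ω = f₁ (fun i : Fin q => Y' (t - 1 - (i : ℤ)) ω) (Z (t - 1) ω)
            + ε t ω * f₂ (fun i : Fin q => Y' (t - 1 - (i : ℤ)) ω) (Z (t - 1) ω)) →
        Integrable (fun ω => |Y' 1 ω| ^ p) P →
        ∀ t, Y' t =ᵐ[P] Y t) := by
  classical
  set F : ℤ → MeasurableSpace Ω := fun t => ⨆ (s : ℤ) (_ : s ≤ t),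
        MeasurableSpace.comap (fun ω => (Z s ω, ε s ω)) inferInstance with hF
  have hFm0 : ∀ t, F t ≤ m0 := fun t => iSup₂_le fun s _ =>
    ((hZmeas s).prodMk (hεmeas s)).comap_le
  have hFmono : ∀ s t, s ≤ t → F s ≤ F t := fun s t hst => iSup₂_le fun u hu =>
    le_iSup₂_of_le u (hu.trans hst) le_rfl
  have hpair : ∀ s, Measurable[F s] (fun ω => (Z s ω, ε s ω)) := fun s =>
    measurable_iff_comap_le.2 (le_iSup₂_of_le s le_rfl le_rfl)
  have hZF : ∀ s, Measurable[F s] (Z s) := fun s => measurable_fst.comp (hpair s)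
  have hεF : ∀ s, Measurable[F s] (ε s) := fun s => measurable_snd.comp (hpair s)
  have hX : ∀ t, Measurable (fun ω => (Z t ω, ε t ω)) := fun t => (hZmeas t).prodMk (hεmeas t)
  have hp0 : 0 < p := by linarith
  have hp1 : 1 ≤ ENNReal.ofReal p := by simpa using ENNReal.ofReal_le_ofReal hp
  have hpz : ENNReal.ofReal p ≠ 0 := by simpa using hp0
  have hpt : ENNReal.ofReal p ≠ ∞ := ENNReal.ofReal_ne_top
  have hpr : (ENNReal.ofReal p).toReal = p := ENNReal.toReal_ofReal hp0.le
  have hW : Measurable (fun ω (t : ℤ) => (Z t ω, ε t ω)) := measurable_pi_lambda _ hX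
  -- the noise is identically distributed
  have hsnd : Measurable (fun w : ℤ → E1 × ℝ => (w 1).2) :=
    measurable_snd.comp (measurable_pi_apply 1)
  have hlaw : ∀ t, P.map (ε t) = P.map (ε 1) := by
    intro t
    have e1 : P.map (ε 1) = (P.map (fun ω (t : ℤ) => (Z t ω, ε t ω))).map (fun w => (w 1).2) := by
      rw [Measure.map_map hsnd hW]; rfl
    have e2 : P.map (ε t) = ((P.map (fun ω (t : ℤ) => (Z t ω, ε t ω))).map (shiftBy (t - 1))).map
        (fun w => (w 1).2) := by
      rw [Measure.map_map hsnd (measurable_shiftBy _),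
        Measure.map_map (hsnd.comp (measurable_shiftBy _)) hW]
      congr 1
      funext ω
      simp [shiftBy]
    rw [e2, map_shiftBy hstat.toMeasurePreserving, e1]
  have hνp : IsProbabilityMeasure (P.map (ε 1)) :=
    Measure.isProbabilityMeasure_map (hεmeas 1).aemeasurable
  have hmeasc : ∀ i z, Measurable (fun e : ℝ => (a₁ i z + a₂ i z * |e|) ^ p) := fun i z => by
    fun_prop
  -- one step estimate
  have hin : ∀ t (y y' : Fin q → ℝ) (z : E1),
      eLpNorm (fun x => f₁ y z + x * f₂ y z - (f₁ y' z + x * f₂ y' z)) (ENNReal.ofReal p)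
        (P.map (ε t)) ≤ ∑ i, ENNReal.ofReal (b i) * ‖y i - y' i‖ₑ := by
    intro t y y' z
    rw [hlaw t]
    refine inner_bound (P.map (ε 1)) p hp (fun i => a₁ i z) (fun i => a₂ i z) b
      (fun i => y i - y' i) (fun i => ha₁pos i z) (fun i => ha₂pos i z) hb0 ?_ ?_ _ ?_
    · intro i
      exact (integrable_map_measure (hmeasc i z).aestronglyMeasurable
        (hεmeas 1).aemeasurable).2 (hcoefint i z)
    · intro i
      rw [integral_map (hεmeas 1).aemeasurable (hmeasc i z).aestronglyMeasurable]
      exact hbb i z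
    · intro e
      calc |f₁ y z + e * f₂ y z - (f₁ y' z + e * f₂ y' z)|
          = |(f₁ y z - f₁ y' z) + e * (f₂ y z - f₂ y' z)| := by congr 1; ring
        _ ≤ |f₁ y z - f₁ y' z| + |e| * |f₂ y z - f₂ y' z| := by
            rw [← abs_mul]; exact abs_add_le _ _
        _ ≤ ∑ i, a₁ i z * |y i - y' i| + |e| * ∑ i, a₂ i z * |y i - y' i| :=
            add_le_add (hCH2₁ y y' z) (mul_le_mul_of_nonneg_left (hCH2₂ y y' z) (abs_nonneg e))
        _ = _ := by
            rw [Finset.mul_sum, ← Finset.sum_add_distrib]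
            exact Finset.sum_congr rfl fun i _ => by ring
  have hcon : ∀ (t : ℤ) (U V : Fin q → Ω → ℝ), (∀ i, Measurable[F (t - 1)] (U i)) →
      (∀ i, Measurable[F (t - 1)] (V i)) →
      eLpNorm (fun ω => f₁ (fun i => U i ω) (Z (t - 1) ω) + ε t ω * f₂ (fun i => U i ω) (Z (t - 1) ω)
        - (f₁ (fun i => V i ω) (Z (t - 1) ω) + ε t ω * f₂ (fun i => V i ω) (Z (t - 1) ω)))
        (ENNReal.ofReal p) P ≤
      ∑ i, ENNReal.ofReal (b i) * eLpNorm (fun ω => U i ω - V i ω) (ENNReal.ofReal p) P := by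
    intro t U V hU hV
    exact contraction (F (t - 1)) P f₁ f₂ hf₁ hf₂ p hp b hb0 (ε t) (hεmeas t) (hin t)
      (hFm0 _) (hindep t) (Z (t - 1)) (hZF _) U V hU hV
  set β : ℝ≥0∞ := ∑ i, ENNReal.ofReal (b i) with hβ
  have hβ1 : β < 1 := by
    rw [hβ, ← ENNReal.ofReal_sum_of_nonneg fun i _ => hb0 i]
    exact ENNReal.ofReal_lt_one.2 hbsum
  -- the iterates
  let W : Ω → ℤ → E1 × ℝ := fun ω t => (Z t ω, ε t ω)
  let X : ℕ → ℤ → Ω → ℝ := fun n t ω => charnIter f₁ f₂ n (shiftBy t (W ω))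
  have hXsucc : ∀ n t ω, X (n + 1) t ω = f₁ (fun i : Fin q => X n (t - 1 - (i : ℤ)) ω) (Z (t - 1) ω)
      + ε t ω * f₂ (fun i : Fin q => X n (t - 1 - (i : ℤ)) ω) (Z (t - 1) ω) := fun n t ω =>
    charnIter_succ f₁ f₂ n t (W ω)
  have hX0 : ∀ t ω, X 0 t ω = 0 := fun t ω => rfl
  have hXF : ∀ n t, Measurable[F t] (X n t) := by
    intro n
    induction n with
    | zero => intro t; exact measurable_const
    | succ n ih =>
      intro t
      have := measurable_step_aux (m := F t) hf₁ hf₂ (U := fun i : Fin q => X n (t - 1 - (i : ℤ)))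
        (ζ := Z (t - 1)) (e := ε t)
        (fun i => (ih _).mono (hFmono _ _ (by omega)) le_rfl)
        ((hZF (t - 1)).mono (hFmono _ _ (by omega)) le_rfl) (hεF t)
      have h2 : X (n + 1) t = _ := funext (hXsucc n t)
      rw [h2]
      exact this
  have hXm : ∀ n t, Measurable (X n t) := fun n t => (hXF n t).mono (hFm0 t) le_rfl
  -- bound on the first iterate
  set C : ℝ≥0∞ := eLpNorm (X 1 0) (ENNReal.ofReal p) P with hC
  have hstX : ∀ n t, eLpNorm (X n t) (ENNReal.ofReal p) P = eLpNorm (X n 0) (ENNReal.ofReal p) P := by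
    intro n t
    have h1 := eLpNorm_stationary hX hstat.toMeasurePreserving
      (measurable_charnIter hf₁ hf₂ n) (ENNReal.ofReal p) t
    have h2 := eLpNorm_stationary hX hstat.toMeasurePreserving
      (measurable_charnIter hf₁ hf₂ n) (ENNReal.ofReal p) 0
    exact h1.trans h2.symm
  have hCt : C ≠ ∞ := by
    have hA := hcon 1 (fun i => X 0 (1 - 1 - (i : ℤ))) (fun i _ => xbar i)
      (fun i => measurable_const) (fun i => measurable_const)
    have hmm : Measurable (fun ω => f₁ xbar (Z 0 ω) + ε 1 ω * f₂ xbar (Z 0 ω)) :=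
      measurable_step_aux (U := fun i _ => xbar i) hf₁ hf₂ (fun i => measurable_const)
        (hZmeas 0) (hεmeas 1)
    have hB : MemLp (fun ω => f₁ xbar (Z 0 ω) + ε 1 ω * f₂ xbar (Z 0 ω)) (ENNReal.ofReal p) P := by
      rw [← integrable_norm_rpow_iff hmm.aestronglyMeasurable hpz hpt, hpr]
      exact hmom
    have hle : C ≤ eLpNorm (fun ω => X 1 1 ω - (f₁ xbar (Z 0 ω) + ε 1 ω * f₂ xbar (Z 0 ω)))
        (ENNReal.ofReal p) P + eLpNorm (fun ω => f₁ xbar (Z 0 ω) + ε 1 ω * f₂ xbar (Z 0 ω))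
        (ENNReal.ofReal p) P := by
      rw [hC, ← hstX 1 1]
      refine le_trans (le_of_eq ?_) (eLpNorm_add_le
        ((hXm 1 1).sub hmm).aestronglyMeasurable hmm.aestronglyMeasurable hp1)
      congr 1
      funext ω
      simp
    refine ne_top_of_le_ne_top (ENNReal.add_ne_top.2 ⟨?_, hB.2.ne⟩) hle
    have hA' : eLpNorm (fun ω => X 1 1 ω - (f₁ xbar (Z 0 ω) + ε 1 ω * f₂ xbar (Z 0 ω)))
        (ENNReal.ofReal p) P ≤ _ := hA
    refine ne_top_of_le_ne_top ?_ hA'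
    refine ENNReal.sum_ne_top.2 fun i _ => ENNReal.mul_ne_top ENNReal.ofReal_ne_top ?_
    exact (memLp_const (0 - xbar i)).2.ne
  have hinc : ∀ n t, eLpNorm (fun ω => X (n + 1) t ω - X n t ω) (ENNReal.ofReal p) P
      ≤ β ^ n * C := by
    intro n
    induction n with
    | zero =>
      intro t
      simp only [hX0, sub_zero, pow_zero, one_mul, zero_add]
      exact (hstX 1 t).le
    | succ n ih =>
      intro t
      have h1 := hcon t (fun i => X (n + 1) (t - 1 - (i : ℤ))) (fun i => X n (t - 1 - (i : ℤ)))
        (fun i => (hXF _ _).mono (hFmono _ _ (by omega)) le_rfl)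
        (fun i => (hXF _ _).mono (hFmono _ _ (by omega)) le_rfl)
      simp only [← hXsucc] at h1
      refine h1.trans ?_
      calc _ ≤ ∑ i, ENNReal.ofReal (b i) * (β ^ n * C) := by
            gcongr with i _
            exact ih _
        _ = _ := by rw [← Finset.sum_mul, ← hβ]; ring
  have hBsum : ∑' n, β ^ n * C ≠ ∞ := by
    rw [ENNReal.tsum_mul_right, ENNReal.tsum_geometric]
    refine ENNReal.mul_ne_top (ENNReal.inv_ne_top.2 ?_) hCt
    exact (tsub_pos_of_lt hβ1).ne'
  let H : (ℤ → E1 × ℝ) → ℝ := fun w => limUnder atTop fun n => charnIter f₁ f₂ n w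
  have hH : Measurable H := measurable_limUnder_aux (measurable_charnIter hf₁ hf₂)
  let Y : ℤ → Ω → ℝ := fun t ω => H (shiftBy t (W ω))
  have hYF : ∀ t, Measurable[F t] (Y t) := fun t => measurable_limUnder_aux (fun n => hXF n t)
  have hYm : ∀ t, Measurable (Y t) := fun t => (hYF t).mono (hFm0 t) le_rfl
  have hlim : ∀ t, ∀ᵐ ω ∂P, Tendsto (fun n => X n t ω) atTop (𝓝 (Y t ω)) := fun t =>
    ae_tendsto_aux hp1 (fun n => hXm n t) hBsum (fun n => hinc n t)
  have hcont : ∀ (g : (Fin q → ℝ) → E1 → ℝ) (a : Fin q → E1 → ℝ),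
      (∀ (y y' : Fin q → ℝ) (z : E1), |g y z - g y' z| ≤ ∑ i : Fin q, a i z * |y i - y' i|) →
      ∀ z, Continuous fun y => g y z := by
    intro g a hg z
    rw [continuous_iff_continuousAt]
    intro y
    rw [ContinuousAt, tendsto_iff_dist_tendsto_zero]
    have h0 : Tendsto (fun y' : Fin q → ℝ => ∑ i : Fin q, a i z * |y' i - y i|) (𝓝 y) (𝓝 0) := by
      have : Continuous (fun y' : Fin q → ℝ => ∑ i : Fin q, a i z * |y' i - y i|) := by fun_prop
      simpa using this.tendsto y
    exact squeeze_zero (fun _ => dist_nonneg) (fun y' => by rw [Real.dist_eq]; exact hg y' y z) h0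
  have hYrec : ∀ t : ℤ, ∀ᵐ ω ∂P,
        Y t ω = f₁ (fun i : Fin q => Y (t - 1 - (i : ℤ)) ω) (Z (t - 1) ω)
          + ε t ω * f₂ (fun i : Fin q => Y (t - 1 - (i : ℤ)) ω) (Z (t - 1) ω) := by
    intro t
    filter_upwards [ae_all_iff.2 hlim] with ω hω
    have hy : Tendsto (fun n => fun i : Fin q => X n (t - 1 - (i : ℤ)) ω) atTop
        (𝓝 (fun i : Fin q => Y (t - 1 - (i : ℤ)) ω)) := tendsto_pi_nhds.2 fun i => hω _
    have h1 := ((hcont f₁ a₁ hCH2₁ (Z (t - 1) ω)).tendsto _).comp hy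
    have h2 := ((hcont f₂ a₂ hCH2₂ (Z (t - 1) ω)).tendsto _).comp hy
    have h3 := h1.add (h2.const_mul (ε t ω))
    have h4 := (tendsto_add_atTop_iff_nat 1).2 (hω t)
    refine tendsto_nhds_unique h4 (h3.congr fun n => ?_)
    exact (hXsucc n t ω).symm
  have hXbd : ∀ n t, eLpNorm (X n t) (ENNReal.ofReal p) P ≤ ∑' n, β ^ n * C := by
    intro n t
    refine le_trans ?_ (ENNReal.sum_le_tsum (Finset.range n))
    induction n with
    | zero =>
      have : X 0 t = 0 := rfl
      rw [this, eLpNorm_zero]; exact zero_le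
    | succ n ih =>
      rw [Finset.sum_range_succ]
      have h1 : X (n + 1) t = X n t + fun ω => X (n + 1) t ω - X n t ω := by
        funext ω; simp
      rw [h1]
      exact (eLpNorm_add_le (hXm n t).aestronglyMeasurable
        ((hXm (n + 1) t).sub (hXm n t)).aestronglyMeasurable hp1).trans
        (add_le_add ih (hinc n t))
  have hYbd : ∀ t, eLpNorm (Y t) (ENNReal.ofReal p) P ≤ ∑' n, β ^ n * C := by
    intro t
    refine (Lp.eLpNorm_lim_le_liminf_eLpNorm (fun n => (hXm n t).aestronglyMeasurable) (Y t)
      (hlim t)).trans ?_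
    refine (Filter.liminf_le_liminf (Filter.Eventually.of_forall fun n => hXbd n t)).trans ?_
    simp
  refine ⟨Y, hYF, hYrec, ?_, ?_, ?_⟩
  · have hΦ : Measurable (fun (w : ℤ → E1 × ℝ) (t : ℤ) => H (shiftBy t w)) :=
      measurable_pi_lambda _ fun t => hH.comp (measurable_shiftBy t)
    have hmap : P.map (fun ω (t : ℤ) => Y t ω) =
        (P.map (fun ω (t : ℤ) => (Z t ω, ε t ω))).map (fun w t => H (shiftBy t w)) := by
      rw [Measure.map_map hΦ hW]; rfl
    have hmp : MeasurePreserving (fun (w : ℤ → E1 × ℝ) (t : ℤ) => H (shiftBy t w))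
        (P.map (fun ω (t : ℤ) => (Z t ω, ε t ω))) (P.map (fun ω (t : ℤ) => Y t ω)) :=
      ⟨hΦ, hmap.symm⟩
    refine hmp.ergodic_of_ergodic_semiconj hstat measurable_pathShift ?_
    intro w
    funext t
    change H (shiftBy t (pathShift w)) = H (shiftBy (t + 1) w)
    congr 1
    funext s
    simp only [shiftBy, pathShift]
    congr 1
    ring
  · have : MemLp (Y 1) (ENNReal.ofReal p) P :=
      ⟨(hYm 1).aestronglyMeasurable, lt_of_le_of_lt (hYbd 1) hBsum.lt_top⟩
    rw [← integrable_norm_rpow_iff (hYm 1).aestronglyMeasurable hpz hpt, hpr] at this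
    exact this
  · intro Y' hY'F hY'st hY'rec hY'int
    have hY'm : ∀ t, Measurable (Y' t) := fun t => (hY'F t).mono (hFm0 t) le_rfl
    have hY'1 : MemLp (Y' 1) (ENNReal.ofReal p) P := by
      rw [← integrable_norm_rpow_iff (hY'm 1).aestronglyMeasurable hpz hpt, hpr]
      exact hY'int
    have hY't : ∀ t, eLpNorm (Y' t) (ENNReal.ofReal p) P = eLpNorm (Y' 1) (ENNReal.ofReal p) P := by
      intro t
      have h1 := eLpNorm_stationary hY'm hY'st (g := fun w => w 1) (measurable_pi_apply 1)
        (ENNReal.ofReal p) (t - 1)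
      simpa using h1
    let δ : ℤ → ℝ≥0∞ := fun t => eLpNorm (fun ω => Y' t ω - Y t ω) (ENNReal.ofReal p) P
    have hδb : ∀ t, δ t ≤ eLpNorm (Y' 1) (ENNReal.ofReal p) P + ∑' n, β ^ n * C := by
      intro t
      refine (eLpNorm_sub_le (hY'm t).aestronglyMeasurable (hYm t).aestronglyMeasurable hp1).trans ?_
      exact add_le_add (hY't t).le (hYbd t)
    have hδrec : ∀ t, δ t ≤ β * ⨆ s, δ s := by
      intro t
      have h1 := hcon t (fun i => Y' (t - 1 - (i : ℤ))) (fun i => Y (t - 1 - (i : ℤ)))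
        (fun i => (hY'F _).mono (hFmono _ _ (by omega)) le_rfl)
        (fun i => (hYF _).mono (hFmono _ _ (by omega)) le_rfl)
      have h2 : δ t = eLpNorm (fun ω => f₁ (fun i : Fin q => Y' (t - 1 - (i : ℤ)) ω) (Z (t - 1) ω)
          + ε t ω * f₂ (fun i : Fin q => Y' (t - 1 - (i : ℤ)) ω) (Z (t - 1) ω)
          - (f₁ (fun i : Fin q => Y (t - 1 - (i : ℤ)) ω) (Z (t - 1) ω)
          + ε t ω * f₂ (fun i : Fin q => Y (t - 1 - (i : ℤ)) ω) (Z (t - 1) ω)))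
          (ENNReal.ofReal p) P := by
        refine eLpNorm_congr_ae ?_
        filter_upwards [hY'rec t, hYrec t] with ω h3 h4
        rw [← h3, ← h4]
      rw [h2]
      refine h1.trans ?_
      rw [hβ, Finset.sum_mul]
      gcongr with i _
      exact le_iSup δ (t - 1 - (i : ℤ))
    have hSt : (⨆ s, δ s) ≠ ∞ :=
      ne_top_of_le_ne_top (ENNReal.add_ne_top.2 ⟨hY'1.2.ne, hBsum⟩) (iSup_le hδb)
    have hS0 : (⨆ s, δ s) = 0 := by
      by_contra hne
      have h1 : (⨆ s, δ s) ≤ β * ⨆ s, δ s := iSup_le hδrec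
      have h2 : β * (⨆ s, δ s) < 1 * ⨆ s, δ s := ENNReal.mul_lt_mul_left hne hSt hβ1
      rw [one_mul] at h2
      exact absurd h1 (not_le.2 h2)
    intro t
    have hz : δ t = 0 := by
      have := le_iSup δ t
      rw [hS0] at this
      exact le_antisymm this (zero_le)
    have := (eLpNorm_eq_zero_iff ((hY'm t).sub (hYm t)).aestronglyMeasurable hpz).1 hz
    filter_upwards [this] with ω hω
    exact sub_eq_zero.1 hω

end
end

section
/- Let (ζ_t)_{t∈ℤ} be a stationary and ergodic process with values in a measurable space E', let q ≥ 1 and g : {0,1}^q × E' → ℝ measurable, and suppose that P(min over y ∈ {0,1}^q and 1 ≤ t ≤ q of g(y, ζ_t) > 0) + P(max over y ∈ {0,1}^q and 1 ≤ t ≤ q of g(y, ζ_t) ≤ 0) > 0. Then there exists a unique stationary and ergodic {0,1}-valued process (Y_t)_{t∈ℤ} satisfying Y_t = 1_{g(Y_{t−1},…,Y_{t−q},ζ_t) > 0} for all t ∈ ℤ. -/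
open MeasureTheory Filter Topology ProbabilityTheory
open scoped ENNReal NNReal

noncomputable section

/-- `ℤ`-indexed iterates of an invertible map `T` (with inverse `T'`). -/
def iterZ {Ω : Type*} (T T' : Ω → Ω) : ℤ → Ω → Ω
  | Int.ofNat n => T^[n]
  | Int.negSucc n => T'^[n + 1]

/-- Solution of the recursion started at time `s` from the zero history. -/
def startSol {E' : Type*} {q : ℕ} (g : (Fin q → Bool) → E' → ℝ) (z : ℤ → E') (s : ℤ) (t : ℤ) :
    Bool :=
  if h : t ≤ s then false
  else decide (0 < g (fun i : Fin q => startSol g z s (t - 1 - (i : ℤ))) (z t))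
termination_by (t - s).toNat
decreasing_by omega

theorem startSol_iff {E' : Type*} {q : ℕ} (g : (Fin q → Bool) → E' → ℝ) (z : ℤ → E') (s t : ℤ)
    (h : s < t) : startSol g z s t = true ↔
      0 < g (fun i : Fin q => startSol g z s (t - 1 - (i : ℤ))) (z t) := by
  rw [startSol, dif_neg (not_le.mpr h)]
  simp

theorem startSol_of_le {E' : Type*} {q : ℕ} (g : (Fin q → Bool) → E' → ℝ) (z : ℤ → E') (s t : ℤ)
    (h : t ≤ s) : startSol g z s t = false := by
  rw [startSol, dif_pos h]

theorem startSol_shift {E' : Type*} {q : ℕ} (g : (Fin q → Bool) → E' → ℝ) (z : ℤ → E') (s : ℤ)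
    (n : ℕ) : ∀ t : ℤ, t ≤ s + n →
    startSol g (fun u => z (u + 1)) s t = startSol g z (s + 1) (t + 1) := by
  induction n with
  | zero =>
    intro t ht
    rw [startSol_of_le _ _ _ _ (by omega), startSol_of_le _ _ _ _ (by omega)]
  | succ n ih =>
    intro t ht
    by_cases h : t ≤ s
    · rw [startSol_of_le _ _ _ _ (by omega), startSol_of_le _ _ _ _ (by omega)]
    · rw [Bool.eq_iff_iff, startSol_iff _ _ _ _ (by omega), startSol_iff _ _ _ _ (by omega)]
      have : (fun i : Fin q => startSol g (fun u => z (u + 1)) s (t - 1 - (i : ℤ)))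
          = fun i : Fin q => startSol g z (s + 1) (t + 1 - 1 - (i : ℤ)) := by
        funext i
        rw [ih _ (by push_cast at ht; omega)]
        congr 1
        ring
      rw [this]

theorem startSol_measurable {Ω E' : Type*} {q : ℕ} [MeasurableSpace Ω] [MeasurableSpace E']
    (g : (Fin q → Bool) → E' → ℝ)
    (hg : Measurable fun z : (Fin q → Bool) × E' => g z.1 z.2)
    (ζ : ℤ → Ω → E') (hζ : ∀ t, Measurable (ζ t)) (s : ℤ) (n : ℕ) : ∀ t : ℤ, t ≤ s + n →
    Measurable fun ω => startSol g (fun u => ζ u ω) s t := by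
  induction n with
  | zero =>
    intro t ht
    have : (fun ω => startSol g (fun u => ζ u ω) s t) = fun _ => false := by
      funext ω
      exact startSol_of_le _ _ _ _ (by omega)
    rw [this]
    exact measurable_const
  | succ n ih =>
    intro t ht
    by_cases h : t ≤ s
    · exact ih t (by omega)
    · refine measurable_to_bool ?_
      have : (fun ω => startSol g (fun u => ζ u ω) s t) ⁻¹' {true}
        = {ω | 0 < g (fun i : Fin q => startSol g (fun u => ζ u ω) s (t - 1 - (i : ℤ))) (ζ t ω)} := by
        ext ω
        simp only [Set.mem_preimage, Set.mem_singleton_iff, Set.mem_ofPred_eq]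
        exact startSol_iff _ _ _ _ (by omega)
      rw [this]
      have h1 : Measurable fun ω =>
          (fun i : Fin q => startSol g (fun u => ζ u ω) s (t - 1 - (i : ℤ))) :=
        measurable_pi_lambda _ fun i => ih _ (by push_cast at ht; omega)
      exact measurableSet_lt measurable_const (hg.comp (h1.prodMk (hζ t)))

/-- Coalescence event at time `m`. -/
def Coal {E' : Type*} {q : ℕ} (g : (Fin q → Bool) → E' → ℝ) (z : ℤ → E') (m : ℤ) : Prop :=
  (∀ (y : Fin q → Bool) (t : Fin q), 0 < g y (z (m + ((t : ℤ) + 1)))) ∨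
  (∀ (y : Fin q → Bool) (t : Fin q), g y (z (m + ((t : ℤ) + 1))) ≤ 0)

theorem coal_eq {E' : Type*} {q : ℕ} (g : (Fin q → Bool) → E' → ℝ) (z : ℤ → E') (m : ℤ)
    (hc : Coal g z m) (u v : ℤ → Bool)
    (hu : ∀ t, m < t → (u t = true ↔ 0 < g (fun i : Fin q => u (t - 1 - (i : ℤ))) (z t)))
    (hv : ∀ t, m < t → (v t = true ↔ 0 < g (fun i : Fin q => v (t - 1 - (i : ℤ))) (z t)))
    (n : ℕ) : ∀ t, m < t → t ≤ m + n → u t = v t := by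
  induction n with
  | zero => intro t h1 h2; omega
  | succ n ih =>
    intro t h1 h2
    rw [Bool.eq_iff_iff, hu t h1, hv t h1]
    by_cases hk : t ≤ m + q
    · have e : t = m + ((((⟨(t - m - 1).toNat, by omega⟩ : Fin q) : ℕ) : ℤ) + 1) := by
        simp only
        omega
      rcases hc with hc | hc
      · have a := fun y => hc y ⟨(t - m - 1).toNat, by omega⟩
        rw [← e] at a
        simp [a]
      · have a := fun y => hc y ⟨(t - m - 1).toNat, by omega⟩
        rw [← e] at a
        simp [not_lt.mpr (a _)]
    · have : (fun i : Fin q => u (t - 1 - (i : ℤ))) = fun i : Fin q => v (t - 1 - (i : ℤ)) := by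
        funext i
        have := i.2
        exact ih _ (by omega) (by push_cast at h2; omega)
      rw [this]

theorem coal_eq' {E' : Type*} {q : ℕ} (g : (Fin q → Bool) → E' → ℝ) (z : ℤ → E') (m : ℤ)
    (hc : Coal g z m) (u v : ℤ → Bool)
    (hu : ∀ t, m < t → (u t = true ↔ 0 < g (fun i : Fin q => u (t - 1 - (i : ℤ))) (z t)))
    (hv : ∀ t, m < t → (v t = true ↔ 0 < g (fun i : Fin q => v (t - 1 - (i : ℤ))) (z t)))
    (t : ℤ) (ht : m < t) : u t = v t :=
  coal_eq g z m hc u v hu hv (t - m).toNat t ht (by omega)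

open Classical in
/-- The limiting solution. -/
def limSol {E' : Type*} {q : ℕ} (g : (Fin q → Bool) → E' → ℝ) (z : ℤ → E') (t : ℤ) : Bool :=
  decide (∃ S : ℤ, ∀ s : ℤ, s ≤ S → startSol g z s t = true)

theorem limSol_iff {E' : Type*} {q : ℕ} (g : (Fin q → Bool) → E' → ℝ) (z : ℤ → E') (t : ℤ) :
    limSol g z t = true ↔ ∃ S : ℤ, ∀ s : ℤ, s ≤ S → startSol g z s t = true := by
  simp [limSol]

theorem limSol_eq {E' : Type*} {q : ℕ} (g : (Fin q → Bool) → E' → ℝ) (z : ℤ → E') (m : ℤ)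
    (hc : Coal g z m) (t : ℤ) (ht : m < t) : limSol g z t = startSol g z m t := by
  have key : ∀ s ≤ m, startSol g z s t = startSol g z m t := fun s hs =>
    coal_eq' g z m hc _ _ (fun t h => startSol_iff _ _ _ _ (by omega))
      (fun t h => startSol_iff _ _ _ _ h) t ht
  rw [Bool.eq_iff_iff, limSol_iff]
  constructor
  · rintro ⟨S, hS⟩
    rw [← key (min S m) (min_le_right _ _)]
    exact hS _ (min_le_left _ _)
  · intro h
    exact ⟨m, fun s hs => (key s hs).trans h⟩

theorem limSol_shift {E' : Type*} {q : ℕ} (g : (Fin q → Bool) → E' → ℝ) (z : ℤ → E') (t : ℤ) :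
    limSol g (fun u => z (u + 1)) t = limSol g z (t + 1) := by
  have key : ∀ s, startSol g (fun u => z (u + 1)) s t = startSol g z (s + 1) (t + 1) := fun s =>
    startSol_shift g z s (t - s).toNat t (by omega)
  rw [Bool.eq_iff_iff, limSol_iff, limSol_iff]
  simp only [key]
  constructor
  · rintro ⟨S, hS⟩
    refine ⟨S + 1, fun s hs => ?_⟩
    have := hS (s - 1) (by omega)
    rwa [sub_add_cancel] at this
  · rintro ⟨S, hS⟩
    exact ⟨S - 1, fun s hs => hS _ (by omega)⟩

theorem limSol_measurable {Ω E' : Type*} {q : ℕ} [MeasurableSpace Ω] [MeasurableSpace E']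
    (g : (Fin q → Bool) → E' → ℝ)
    (hg : Measurable fun z : (Fin q → Bool) × E' => g z.1 z.2)
    (ζ : ℤ → Ω → E') (hζ : ∀ t, Measurable (ζ t)) (t : ℤ) :
    Measurable fun ω => limSol g (fun u => ζ u ω) t := by
  refine measurable_to_bool ?_
  have : (fun ω => limSol g (fun u => ζ u ω) t) ⁻¹' {true}
      = ⋃ S : ℤ, ⋂ s : ℤ, ⋂ _ : s ≤ S,
        (fun ω => startSol g (fun u => ζ u ω) s t) ⁻¹' {true} := by
    ext ω
    simp [limSol]
  rw [this]
  refine MeasurableSet.iUnion fun S => MeasurableSet.iInter fun s => MeasurableSet.iInter fun _ => ?_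
  exact startSol_measurable g hg ζ hζ s (t - s).toNat t (by omega) (measurableSet_singleton _)

theorem coal_measurable {Ω E' : Type*} {q : ℕ} [MeasurableSpace Ω] [MeasurableSpace E']
    (g : (Fin q → Bool) → E' → ℝ)
    (hg : Measurable fun z : (Fin q → Bool) × E' => g z.1 z.2)
    (ζ : ℤ → Ω → E') (hζ : ∀ t, Measurable (ζ t)) (m : ℤ) :
    MeasurableSet {ω | Coal g (fun u => ζ u ω) m} := by
  have hm : ∀ (y : Fin q → Bool) (t : ℤ), Measurable fun ω => g y (ζ t ω) := fun y t =>
    hg.comp (measurable_const.prodMk (hζ t))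
  unfold Coal
  rw [Set.ofPred_or]
  simp only [Set.ofPred_forall]
  refine MeasurableSet.union ?_ ?_
  · exact MeasurableSet.iInter fun y => MeasurableSet.iInter fun t =>
      measurableSet_lt measurable_const (hm y _)
  · exact MeasurableSet.iInter fun y => MeasurableSet.iInter fun t =>
      measurableSet_le (hm y _) measurable_const

theorem iterZ_succ {Ω : Type*} (T T' : Ω → Ω) (hTT' : ∀ ω, T' (T ω) = ω) (t : ℤ) (ω : Ω) :
    iterZ T T' t (T ω) = iterZ T T' (t + 1) ω := by
  match t with
  | Int.ofNat n => rfl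
  | Int.negSucc 0 => simp [iterZ, hTT']
  | Int.negSucc (n + 1) =>
    have : Int.negSucc (n + 1) + 1 = Int.negSucc n := by omega
    rw [this]
    simp only [iterZ]
    rw [Function.iterate_succ_apply, hTT']

theorem iterZ_measurable {Ω : Type*} [MeasurableSpace Ω] (T T' : Ω → Ω) (hT : Measurable T)
    (hT' : Measurable T') (t : ℤ) : Measurable (iterZ T T' t) := by
  match t with
  | Int.ofNat n => exact hT.iterate n
  | Int.negSucc n => exact hT'.iterate (n + 1)

theorem ae_coal {Ω E' : Type*} {q : ℕ} [MeasurableSpace Ω] [MeasurableSpace E']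
    (P : Measure Ω) [IsProbabilityMeasure P] (T : Ω → Ω) (hT : Ergodic T P)
    (g : (Fin q → Bool) → E' → ℝ)
    (hg : Measurable fun z : (Fin q → Bool) × E' => g z.1 z.2)
    (ζ : ℤ → Ω → E') (hζ : ∀ t, Measurable (ζ t)) (hs : ∀ t ω, ζ t (T ω) = ζ (t + 1) ω)
    (h0 : P {ω | Coal g (fun u => ζ u ω) 0} ≠ 0) :
    ∀ᵐ ω ∂P, ∀ t : ℤ, ∃ m < t, Coal g (fun u => ζ u ω) m := by
  rw [ae_all_iff]
  set B : ℤ → Set Ω := fun t => {ω | ∃ m < t, Coal g (fun u => ζ u ω) m} with hB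
  have hBm : ∀ t, MeasurableSet (B t) := by
    intro t
    have : B t = ⋃ m : ℤ, ⋃ _ : m < t, {ω | Coal g (fun u => ζ u ω) m} := by
      ext ω
      simp [hB]
    rw [this]
    exact MeasurableSet.iUnion fun m => MeasurableSet.iUnion fun _ => coal_measurable g hg ζ hζ m
  have hA : ∀ m ω, Coal g (fun u => ζ u (T ω)) m ↔ Coal g (fun u => ζ u ω) (m + 1) := by
    intro m ω
    simp only [Coal, hs]
    have e : ∀ t : Fin q, m + ((t : ℤ) + 1) + 1 = m + 1 + ((t : ℤ) + 1) := fun t => by ring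
    simp only [e]
  have hpre : ∀ t, T ⁻¹' B t = B (t + 1) := by
    intro t
    ext ω
    simp only [hB, Set.mem_preimage, Set.mem_ofPred_eq, hA]
    constructor
    · rintro ⟨m, h, h'⟩
      exact ⟨m + 1, by omega, h'⟩
    · rintro ⟨m, h, h'⟩
      exact ⟨m - 1, by omega, by rwa [sub_add_cancel]⟩
  have hPs : ∀ t, P (B (t + 1)) = P (B t) := fun t => by
    rw [← hpre, hT.measure_preimage (hBm t).nullMeasurableSet]
  have hPc : ∀ t, P (B t) = P (B 1) := by
    intro t
    induction t using Int.induction_on with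
    | zero => rw [← hPs 0]; rfl
    | succ i ih => rw [hPs, ih]
    | pred i ih => rw [← hPs, sub_add_cancel, ih]
  have hne : P (B 1) ≠ 0 := by
    intro h
    refine h0 (measure_mono_null ?_ h)
    intro ω hω
    exact ⟨0, by norm_num, hω⟩
  have hle : B 1 ≤ᵐ[P] T ⁻¹' B 1 := by
    rw [hpre]
    refine Eventually.of_forall ?_
    rintro ω ⟨m, h, h'⟩
    exact ⟨m, by omega, h'⟩
  have h1 : P (B 1) = 1 := by
    rcases hT.ae_empty_or_univ_of_ae_le_preimage (hBm 1).nullMeasurableSet hle with h | h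
    · exact absurd (by simpa using measure_congr h) hne
    · simpa using measure_congr h
  intro t
  have h2 : P (B t) = 1 := (hPc t).trans h1
  exact (mem_ae_iff_prob_eq_one (hBm t)).mpr h2

/-- Proposition 4.5, part 1: for the dynamic binary choice model
`Y_t = 1_{g(Y_{t-1},…,Y_{t-q},ζ_t) > 0}` with stationary ergodic `(ζ_t)`, if
`P(min_{y,1≤t≤q} g(y,ζ_t) > 0) + P(max_{y,1≤t≤q} g(y,ζ_t) ≤ 0) > 0` then there is a unique
stationary — and ergodic — `{0,1}`-valued solution. -/
theorem binary_choice_solution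
    {Ω E' : Type*} {q : ℕ} [m0 : MeasurableSpace Ω] [MeasurableSpace E']
    (P : Measure Ω) [IsProbabilityMeasure P]
    (hq : 0 < q)
    -- (ζ_t) stationary and ergodic, encoded via an invertible ergodic shift T
    (T T' : Ω → Ω) (hT : Ergodic T P) (hT' : Measurable T')
    (hTT' : ∀ ω, T' (T ω) = ω) (hT'T : ∀ ω, T (T' ω) = ω)
    (ζ0 : Ω → E') (hζ0 : Measurable ζ0)
    (ζ : ℤ → Ω → E') (hζ : ∀ t ω, ζ t ω = ζ0 (iterZ T T' t ω))
    (g : (Fin q → Bool) → E' → ℝ)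
    (hg : Measurable fun z : (Fin q → Bool) × E' => g z.1 z.2)
    -- the coalescence condition
    (hcoal : 0 <
      P {ω | ∀ (y : Fin q → Bool) (t : Fin q), 0 < g y (ζ ((t : ℤ) + 1) ω)}
      + P {ω | ∀ (y : Fin q → Bool) (t : Fin q), g y (ζ ((t : ℤ) + 1) ω) ≤ 0}) :
    ∃ Y : ℤ → Ω → Bool,
      (∀ t, Measurable (Y t)) ∧
      -- Y solves the binary autoregression
      (∀ t : ℤ, ∀ᵐ ω ∂P,
        (Y t ω = true ↔ 0 < g (fun i : Fin q => Y (t - 1 - (i : ℤ)) ω) (ζ t ω))) ∧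
      -- Y is stationary and ergodic
      Ergodic pathShift (P.map (fun ω (t : ℤ) => Y t ω)) ∧
      -- uniqueness among stationary solutions
      (∀ Y' : ℤ → Ω → Bool, (∀ t, Measurable (Y' t)) →
        MeasurePreserving pathShift
          (P.map (fun ω (t : ℤ) => Y' t ω)) (P.map (fun ω (t : ℤ) => Y' t ω)) →
        (∀ t : ℤ, ∀ᵐ ω ∂P,
          (Y' t ω = true ↔ 0 < g (fun i : Fin q => Y' (t - 1 - (i : ℤ)) ω) (ζ t ω))) →
        ∀ t, Y' t =ᵐ[P] Y t) := by
  have hζm : ∀ t, Measurable (ζ t) := by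
    intro t
    have : ζ t = ζ0 ∘ iterZ T T' t := funext (hζ t)
    rw [this]
    exact hζ0.comp (iterZ_measurable T T' hT.measurable hT' t)
  have hs : ∀ t ω, ζ t (T ω) = ζ (t + 1) ω := by
    intro t ω
    rw [hζ, hζ, iterZ_succ T T' hTT']
  have h0 : P {ω | Coal g (fun u => ζ u ω) 0} ≠ 0 := by
    intro h
    refine hcoal.ne' ?_
    rw [add_eq_zero]
    constructor
    · refine measure_mono_null (fun ω hω => Or.inl ?_) h
      simpa using hω
    · refine measure_mono_null (fun ω hω => Or.inr ?_) h
      simpa using hω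
  have hgood := ae_coal P T hT g hg ζ hζm hs h0
  have hYm : ∀ t, Measurable fun ω => limSol g (fun u => ζ u ω) t :=
    limSol_measurable g hg ζ hζm
  refine ⟨fun t ω => limSol g (fun u => ζ u ω) t, hYm, ?_, ?_, ?_⟩
  · intro t
    filter_upwards [hgood] with ω hω
    obtain ⟨m, hm, hc⟩ := hω (t - q)
    rw [limSol_eq g _ m hc t (by omega), startSol_iff _ _ _ _ (by omega)]
    have : (fun i : Fin q => startSol g (fun u => ζ u ω) m (t - 1 - (i : ℤ)))
        = fun i : Fin q => limSol g (fun u => ζ u ω) (t - 1 - (i : ℤ)) := by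
      funext i
      have := i.2
      exact (limSol_eq g _ m hc _ (by omega)).symm
    rw [this]
  · have hΦ : Measurable fun ω (t : ℤ) => limSol g (fun u => ζ u ω) t :=
      measurable_pi_lambda _ hYm
    have hsh : Measurable (pathShift : (ℤ → Bool) → ℤ → Bool) :=
      measurable_pi_lambda _ fun t => measurable_pi_apply (t + 1)
    have hsemi : ∀ ω, pathShift (fun t : ℤ => limSol g (fun u => ζ u ω) t)
        = fun t : ℤ => limSol g (fun u => ζ u (T ω)) t := by
      intro ω
      funext t
      simp only [hs]
      exact (limSol_shift g (fun u => ζ u ω) t).symm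
    refine ⟨⟨hsh, ?_⟩, ⟨?_⟩⟩
    · rw [Measure.map_map hsh hΦ]
      conv_rhs => rw [← hT.map_eq, Measure.map_map hΦ hT.measurable]
      congr 1
      funext ω
      exact hsemi ω
    · intro s hsm hinv
      have hc : EventuallyConst ((fun ω (t : ℤ) => limSol g (fun u => ζ u ω) t) ⁻¹' s) (ae P) := by
        refine hT.aeconst_set (hΦ hsm) ?_
        ext ω
        have : pathShift (fun t : ℤ => limSol g (fun u => ζ u ω) t) ∈ s
            ↔ (fun t : ℤ => limSol g (fun u => ζ u ω) t) ∈ s := by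
          conv_rhs => rw [← hinv]
          rfl
        rw [hsemi] at this
        exact this
      rw [eventuallyConst_set'] at hc ⊢
      have hp := ae_map_iff (μ := P) hΦ.aemeasurable (p := fun x => x ∈ s) hsm
      have hp' := ae_map_iff (μ := P) hΦ.aemeasurable (p := fun x => x ∉ s) hsm.compl
      rcases hc with hc | hc
      · left
        rw [eventuallyEq_empty] at hc ⊢
        exact hp'.mpr hc
      · right
        rw [eventuallyEq_univ] at hc ⊢
        exact hp.mpr hc
  · intro Y' _ _ hsol t
    filter_upwards [hgood, ae_all_iff.mpr hsol] with ω hω hY'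
    obtain ⟨m, hm, hc⟩ := hω t
    rw [limSol_eq g _ m hc t hm]
    exact coal_eq' g (fun u => ζ u ω) m hc (fun u => Y' u ω) _ (fun t _ => hY' t)
      (fun t h => startSol_iff _ _ _ _ h) t hm

end
end
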